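/- Let K be any field, and let G_36 ⊆ S_8 be the subgroup of order 168 generated by σ_1 = (1,2)(3,4)(5,6)(7,8), σ_2 = (1,3)(2,4)(5,7)(6,8), κ = (1,5)(2,6)(3,7)(4,8), θ = (2,3,7,4,5,6,8), and φ_1 = (2,3,4)(7,6,5). Then the fixed field K(x_1,…,x_8)^{G_36} is K-rational. -/

import Mathlib

noncomputable section

/-- The rational function field `K(x_i : i ∈ I)` over `K`, realized as the fraction field
of the multivariate polynomial ring. -/
abbrev RFF (K : Type) [Field K] (I : Type) := FractionRing (MvPolynomial I K)

/-- The image of the variable `x_i` in the rational function field `K(x_i : i ∈ I)`. -/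
noncomputable def Xvar (K : Type) [Field K] (I : Type) (i : I) : RFF K I :=
  algebraMap (MvPolynomial I K) (RFF K I) (MvPolynomial.X i)

/-- Permutations of the variables as `K`-algebra automorphisms of the polynomial ring. -/
def renameHom (K : Type) [Field K] (I : Type) :
    Equiv.Perm I →* (MvPolynomial I K ≃ₐ[K] MvPolynomial I K) where
  toFun σ := MvPolynomial.renameEquiv K σ
  map_one' := MvPolynomial.renameEquiv_refl K
  map_mul' σ τ := (MvPolynomial.renameEquiv_trans K τ σ).symm

/-- The action of permutations of the variables on `K(x_i : i ∈ I)` by `K`-automorphisms,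
determined by `σ(x_i) = x_{σ(i)}`. -/
noncomputable def permHom (K : Type) [Field K] (I : Type) :
    Equiv.Perm I →* (RFF K I ≃ₐ[K] RFF K I) :=
  (IsFractionRing.fieldEquivOfAlgEquivHom K (RFF K I)).comp (renameHom K I)

/-- The fixed field `K(x_i : i ∈ I)^G` of a group `G` of permutations of the variables. -/
noncomputable def fixedSub (K : Type) [Field K] (I : Type) (G : Subgroup (Equiv.Perm I)) :
    IntermediateField K (RFF K I) :=
  IntermediateField.fixedField (G.map (permHom K I))

/-- An extension `L/K` is `K`-rational if it is purely transcendental over `K`, i.e. generated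
by finitely many algebraically independent elements. -/
def IsRatExt (K : Type) [Field K] (L : Type*) [Field L] [Algebra K L] : Prop :=
  ∃ (n : ℕ) (t : Fin n → L), AlgebraicIndependent K t ∧
    IntermediateField.adjoin K (Set.range t) = ⊤

open IntermediateField in
/-- Adjoining a root of a monic polynomial of degree `d`. -/
theorem degStep {K L : Type} [Field K] [Field L] [Algebra K L] (E : IntermediateField K L)
    (a : L) (d : ℕ) (c : Fin d → L) (hc : ∀ i, c i ∈ E)
    (h : a ^ d = ∑ i, c i * a ^ (i : ℕ))
    (m : ℕ) (hm : Module.rank ↥(E ⊔ adjoin K {a}) L ≤ m) :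
    Module.rank ↥E L ≤ ((d * m : ℕ) : Cardinal) := by
  have e : E ⊔ adjoin K {a} = (adjoin E {a}).restrictScalars K :=
    (IntermediateField.restrictScalars_adjoin_eq_sup K E _).symm
  rw [e] at hm
  have hm' : Module.rank ↥(adjoin E {a}) L ≤ m := hm
  rw [← rank_mul_rank E (adjoin E {a}) L]
  push_cast
  refine mul_le_mul' ?_ hm'
  set r : Polynomial E := ∑ i, Polynomial.C (⟨c i, hc i⟩ : E) * Polynomial.X ^ (i : ℕ) with hr
  have hdeg : r.degree < (d : ℕ) := by
    refine lt_of_le_of_lt (Polynomial.degree_sum_le _ _) ?_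
    refine (Finset.sup_lt_iff (WithBot.bot_lt_coe d)).mpr ?_
    intro i _
    refine lt_of_le_of_lt (Polynomial.degree_C_mul_X_pow_le _ _) ?_
    exact WithBot.coe_lt_coe.mpr i.2
  have hmon : (Polynomial.X ^ d - r).Monic := Polynomial.monic_X_pow_sub hdeg
  have hdq : (Polynomial.X ^ d - r).natDegree = d := by
    apply Polynomial.natDegree_eq_of_degree_eq_some
    rw [Polynomial.degree_sub_eq_left_of_degree_lt] <;> simp [hdeg]
  have hz : Polynomial.aeval a (Polynomial.X ^ d - r) = 0 := by
    simp only [hr, map_sub, map_pow, Polynomial.aeval_X, map_sum, map_mul, Polynomial.aeval_C]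
    rw [h]
    exact sub_self _
  have hIsInt : IsIntegral E a := ⟨_, hmon, hz⟩
  have := IntermediateField.adjoin.finiteDimensional hIsInt
  rw [← Module.finrank_eq_rank, IntermediateField.adjoin.finrank hIsInt]
  norm_cast
  rw [← hdq]
  exact Polynomial.natDegree_le_natDegree (minpoly.min _ _ hmon hz)

theorem degStep' {K L : Type} [Field K] [Field L] [Algebra K L] (E E' : IntermediateField K L)
    (a : L) (d : ℕ) (c : Fin d → L) (hc : ∀ i, c i ∈ E)
    (h : a ^ d = ∑ i, c i * a ^ (i : ℕ)) (hE : E ≤ E') (ha : a ∈ E')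
    (h' : ∀ F : IntermediateField K L, E ≤ F → a ∈ F → E' ≤ F)
    (m : ℕ) (hm : Module.rank ↥E' L ≤ m) :
    Module.rank ↥E L ≤ ((d * m : ℕ) : Cardinal) := by
  have : E' = E ⊔ IntermediateField.adjoin K {a} := by
    apply le_antisymm
    · exact h' _ le_sup_left (le_sup_right (a := E) (IntermediateField.mem_adjoin_simple_self K a))
    · refine sup_le hE ?_
      simpa using ha
  subst this
  exact degStep E a d c hc h m hm

theorem rank_top_le {K L : Type} [Field K] [Field L] [Algebra K L] (E : IntermediateField K L)
    (h : E = ⊤) : Module.rank ↥E L ≤ ((1 : ℕ) : Cardinal) := by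
  subst h
  simp

theorem rff_algIndep {K : Type} [Field K] (g : Fin 8 → RFF K (Fin 8)) (m : ℕ)
    (h : Module.rank ↥(IntermediateField.adjoin K (Set.range g)) (RFF K (Fin 8)) ≤ m) :
    AlgebraicIndependent K g := by
  have hf : Module.Finite ↥(IntermediateField.adjoin K (Set.range g)) (RFF K (Fin 8)) :=
    Module.rank_lt_aleph0_iff.mp (lt_of_le_of_lt h (Cardinal.natCast_lt_aleph0))
  have h1 : Algebra.IsAlgebraic ↥(IntermediateField.adjoin K (Set.range g)) (RFF K (Fin 8)) :=
    inferInstance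
  open scoped IntermediateField.algebraAdjoinAdjoin in
  have h2 : Algebra.IsAlgebraic ↥(Algebra.adjoin K (Set.range g)) (RFF K (Fin 8)) :=
    Algebra.IsAlgebraic.trans _ ↥(IntermediateField.adjoin K (Set.range g)) _
  have h3 : AlgebraicIndependent K (fun i : Fin 8 => algebraMap (MvPolynomial (Fin 8) K) (RFF K (Fin 8)) (MvPolynomial.X i)) :=
    (MvPolynomial.algebraicIndependent_X (Fin 8) K).map' (f := IsScalarTower.toAlgHom K _ _)
      (IsFractionRing.injective _ _)
  have h4 := h3.cardinalMk_le_trdeg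
  exact (Algebra.IsAlgebraic.isTranscendenceBasis_of_le_trdeg_of_finite K g h4).1

/-- The base change map on rational function fields. -/
def rffMap (K K' : Type) [Field K] [Field K'] [Algebra K K'] : RFF K (Fin 8) →+* RFF K' (Fin 8) :=
  IsFractionRing.map (A := MvPolynomial (Fin 8) K) (B := MvPolynomial (Fin 8) K')
    (j := MvPolynomial.map (algebraMap K K')) (MvPolynomial.map_injective _ (algebraMap K K').injective)

theorem rffMap_algebraMap (K K' : Type) [Field K] [Field K'] [Algebra K K'] (p : MvPolynomial (Fin 8) K) :
    rffMap K K' (algebraMap _ _ p) = algebraMap _ _ (MvPolynomial.map (algebraMap K K') p) := by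
  unfold rffMap
  simp [IsFractionRing.map]

/-- The pairing `(l_i) ↦ ∑ e_i l_i`. -/
def rffPair (K K' : Type) [Field K] [Field K'] [Algebra K K'] {ι : Type}
    (e : Module.Basis ι K K') : (ι →₀ RFF K (Fin 8)) →+ RFF K' (Fin 8) :=
  Finsupp.liftAddHom (fun i =>
    (AddMonoidHom.mulLeft (algebraMap K' (RFF K' (Fin 8)) (e i))).comp (rffMap K K').toAddMonoidHom)

theorem rffPair_apply (K K' : Type) [Field K] [Field K'] [Algebra K K'] {ι : Type}
    (e : Module.Basis ι K K') (l : ι →₀ RFF K (Fin 8)) :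
    rffPair K K' e l = l.sum (fun i a => algebraMap K' (RFF K' (Fin 8)) (e i) * rffMap K K' a) := by
  rfl

theorem rffPair_single (K K' : Type) [Field K] [Field K'] [Algebra K K'] {ι : Type}
    (e : Module.Basis ι K K') (i : ι) (a : RFF K (Fin 8)) :
    rffPair K K' e (Finsupp.single i a) = algebraMap K' (RFF K' (Fin 8)) (e i) * rffMap K K' a := by
  simp [rffPair]

theorem rffPair_inj (K K' : Type) [Field K] [Field K'] [Algebra K K'] {ι : Type}
    (e : Module.Basis ι K K') (l : ι →₀ RFF K (Fin 8)) (h : rffPair K K' e l = 0) : l = 0 := by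
  classical
  rw [rffPair_apply, Finsupp.sum] at h
  obtain ⟨d, hd⟩ := IsLocalization.exist_integer_multiples_of_finset
    (nonZeroDivisors (MvPolynomial (Fin 8) K)) (l.support.image l)
  have hd0 : algebraMap (MvPolynomial (Fin 8) K) (RFF K (Fin 8)) d ≠ 0 := by
    simp
  have hp : ∀ i, ∃ p : MvPolynomial (Fin 8) K, algebraMap _ (RFF K (Fin 8)) p =
      algebraMap _ (RFF K (Fin 8)) (d : MvPolynomial (Fin 8) K) * l i := by
    intro i
    by_cases hi : i ∈ l.support
    · obtain ⟨p, hp⟩ := hd (l i) (Finset.mem_image_of_mem _ hi)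
      exact ⟨p, by rw [hp, Algebra.smul_def]⟩
    · exact ⟨0, by simp [Finsupp.notMem_support_iff.mp hi]⟩
  choose p hp using hp
  have h2 : ∑ i ∈ l.support, MvPolynomial.C (e i) * MvPolynomial.map (algebraMap K K') (p i) = 0 := by
    apply IsFractionRing.injective (MvPolynomial (Fin 8) K') (RFF K' (Fin 8))
    rw [map_sum, map_zero]
    simp_rw [map_mul, ← rffMap_algebraMap, hp, map_mul]
    have h3 := congrArg (fun z => rffMap K K' (algebraMap _ (RFF K (Fin 8)) (d : MvPolynomial (Fin 8) K)) * z) h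
    simp only [Finset.mul_sum, mul_zero] at h3
    rw [← h3]
    apply Finset.sum_congr rfl
    intro i _
    rw [← MvPolynomial.algebraMap_eq, ← IsScalarTower.algebraMap_apply]
    ring
  have h5 : ∀ i ∈ l.support, p i = 0 := by
    intro i hi
    ext m
    have h4 := congrArg (MvPolynomial.coeff m) h2
    simp only [MvPolynomial.coeff_sum, MvPolynomial.coeff_C_mul, MvPolynomial.coeff_map,
      MvPolynomial.coeff_zero] at h4
    have := linearIndependent_iff'.mp e.linearIndependent l.support
      (fun i => MvPolynomial.coeff m (p i)) (by
        rw [← h4]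
        apply Finset.sum_congr rfl
        intro i _
        rw [Algebra.smul_def, mul_comm]) i hi
    simpa using this
  ext i
  by_cases hi : i ∈ l.support
  · have := hp i
    rw [h5 i hi, map_zero] at this
    simpa [hd0] using this.symm
  · simpa using hi

theorem rffPair_mul (K K' : Type) [Field K] [Field K'] [Algebra K K'] {ι : Type}
    (e : Module.Basis ι K K') (l : ι →₀ RFF K (Fin 8)) (x : RFF K (Fin 8)) :
    rffPair K K' e (x • l) = rffPair K K' e l * rffMap K K' x := by
  induction l using Finsupp.induction_linear with
  | zero => simp
  | add f g hf hg => rw [smul_add, map_add, map_add, hf, hg, add_mul]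
  | single i a =>
    rw [Finsupp.smul_single, rffPair_single, rffPair_single, smul_eq_mul, map_mul]; ring

theorem rffMap_smul (K K' : Type) [Field K] [Field K'] [Algebra K K'] (c : K) :
    rffMap K K' (algebraMap K _ c) = algebraMap K' _ (algebraMap K K' c) := by
  rw [IsScalarTower.algebraMap_apply K (MvPolynomial (Fin 8) K), rffMap_algebraMap,
    IsScalarTower.algebraMap_apply K' (MvPolynomial (Fin 8) K')]
  simp [MvPolynomial.algebraMap_eq]

theorem rffPair_surj (K K' : Type) [Field K] [Field K'] [Algebra K K'] {ι : Type}
    (e : Module.Basis ι K K') (A : Subalgebra K (RFF K (Fin 8))) (c : K') (u : RFF K (Fin 8))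
    (hu : u ∈ A) : ∃ l : ι →₀ RFF K (Fin 8), (∀ j, l j ∈ A) ∧
      rffPair K K' e l = algebraMap K' _ c * rffMap K K' u := by
  refine ⟨u • (e.repr c).mapRange (algebraMap K _) (map_zero _), ?_, ?_⟩
  · intro j
    simp only [Finsupp.smul_apply, Finsupp.mapRange_apply, smul_eq_mul]
    exact A.mul_mem hu (A.algebraMap_mem _)
  · rw [rffPair_mul, rffPair_apply, Finsupp.sum_mapRange_index (by simp)]
    congr 1
    conv_rhs => rw [← e.linearCombination_repr c, Finsupp.linearCombination_apply, Finsupp.sum, map_sum]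
    rw [Finsupp.sum]
    apply Finset.sum_congr rfl
    intro i _
    rw [rffMap_smul, Algebra.smul_def, map_mul, mul_comm]

theorem rffPair_adjoin (K K' : Type) [Field K] [Field K'] [Algebra K K'] {ι : Type}
    (e : Module.Basis ι K K') (g : Fin 8 → RFF K (Fin 8)) (z : RFF K' (Fin 8))
    (hz : z ∈ Algebra.adjoin K' (Set.range fun i => rffMap K K' (g i))) :
    ∃ l : ι →₀ RFF K (Fin 8), (∀ j, l j ∈ Algebra.adjoin K (Set.range g)) ∧ rffPair K K' e l = z := by
  set A := Algebra.adjoin K (Set.range g) with hA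
  let T : AddSubmonoid (RFF K' (Fin 8)) :=
    { carrier := {z | ∃ l : ι →₀ RFF K (Fin 8), (∀ j, l j ∈ A) ∧ rffPair K K' e l = z}
      zero_mem' := ⟨0, by simp, by simp⟩
      add_mem' := by
        rintro a b ⟨l, hl, rfl⟩ ⟨l', hl', rfl⟩
        exact ⟨l + l', fun j => A.add_mem (hl j) (hl' j), map_add _ _ _⟩ }
  have h1 : ∀ (c : K') (u : RFF K (Fin 8)), u ∈ A → algebraMap K' _ c * rffMap K K' u ∈ T :=
    fun c u hu => rffPair_surj K K' e A c u hu
  change z ∈ T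
  rw [← Subalgebra.mem_toSubmodule, Algebra.adjoin_eq_span] at hz
  induction hz using Submodule.span_induction with
  | mem x hx =>
    have : ∃ u ∈ A, rffMap K K' u = x := by
      induction hx using Submonoid.closure_induction with
      | mem x hx =>
        obtain ⟨i, rfl⟩ := hx
        exact ⟨g i, Algebra.subset_adjoin ⟨i, rfl⟩, rfl⟩
      | one => exact ⟨1, A.one_mem, map_one _⟩
      | mul a b _ _ ha hb =>
        obtain ⟨u, hu, rfl⟩ := ha
        obtain ⟨v, hv, rfl⟩ := hb
        exact ⟨u * v, A.mul_mem hu hv, map_mul _ _ _⟩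
    obtain ⟨u, hu, rfl⟩ := this
    simpa using h1 1 u hu
  | zero => exact T.zero_mem
  | add a b _ _ ha hb => exact T.add_mem ha hb
  | smul c a _ ha =>
    obtain ⟨l, hl, rfl⟩ := ha
    rw [rffPair_apply, Finsupp.sum, Finset.smul_sum]
    refine T.sum_mem fun i _ => ?_
    rw [Algebra.smul_def, ← mul_assoc, ← map_mul]
    exact h1 _ _ (hl i)

open scoped IntermediateField.algebraAdjoinAdjoin in
/-- Degree bounds descend along base change. -/
theorem rff_descent (K K' : Type) [Field K] [Field K'] [Algebra K K']
    (g : Fin 8 → RFF K (Fin 8)) (m : ℕ)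
    (h : Module.rank ↥(IntermediateField.adjoin K' (Set.range fun i => rffMap K K' (g i)))
      (RFF K' (Fin 8)) ≤ m) :
    Module.rank ↥(IntermediateField.adjoin K (Set.range g)) (RFF K (Fin 8)) ≤ m := by
  classical
  apply rank_le
  intro s hs
  rw [← LinearIndependent.iff_fractionRing (Algebra.adjoin K (Set.range g))] at hs
  let e := Module.Basis.ofVectorSpace K K'
  have key : LinearIndependent ↥(IntermediateField.adjoin K' (Set.range fun i => rffMap K K' (g i)))
      (fun i : s => rffMap K K' (i : RFF K (Fin 8))) := by
    rw [← LinearIndependent.iff_fractionRing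
      (Algebra.adjoin K' (Set.range fun i => rffMap K K' (g i)))]
    rw [Fintype.linearIndependent_iff] at hs ⊢
    intro c hc
    choose l hl hl' using fun i : s => rffPair_adjoin K K' e g (c i) (c i).2
    have h0 : rffPair K K' e (∑ i : s, (i : RFF K (Fin 8)) • l i) = 0 := by
      rw [map_sum, ← hc]
      apply Finset.sum_congr rfl
      intro i _
      rw [rffPair_mul, hl']
      rfl
    have h1 := rffPair_inj K K' e _ h0
    intro i
    apply Subtype.ext
    rw [← hl' i]
    have : l i = 0 := by
      ext j
      have h2 := DFunLike.congr_fun h1 j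
      have h3 := hs (fun i => ⟨l i j, hl i j⟩) (by
        rw [Finsupp.finsetSum_apply] at h2
        rw [← h2.trans Finsupp.zero_apply]
        apply Finset.sum_congr rfl
        intro i _
        rw [Finsupp.smul_apply, smul_eq_mul, mul_comm]
        rfl) i
      exact congrArg Subtype.val h3
    rw [this, map_zero]; rfl
  have := key.cardinal_le_rank.trans h
  simpa using this

theorem c3_aux2 {M : Type} [Field M] (X s U V D : M) (hD : D ≠ 0)
    (h : X * D ^ 2 = s * (U + V) * D - 3 * (U ^ 2 - U * V + V ^ 2)) :
    X = s * (U / D + V / D) - 3 * ((U / D) ^ 2 - (U / D) * (V / D) + (V / D) ^ 2) := by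
  field_simp
  linear_combination h

theorem c3_aux3 {M : Type} [Field M] (X s U V D : M) (hD : D ≠ 0)
    (h : X * D ^ 3 = s * U * V * D - (U ^ 3 + V ^ 3)) :
    X = s * ((U / D) * (V / D)) - ((U / D) ^ 3 + (V / D) ^ 3) := by
  field_simp
  linear_combination h

theorem c3_step {K M : Type} [Field K] [Field M] [Algebra K M] (E : IntermediateField K M)
    (a b c a' b' c' : M) (hD : a ^ 2 + b ^ 2 + c ^ 2 - a * b - b * c - c * a ≠ 0)
    (hab : a ≠ b) (hac : a ≠ c) (hbc : b ≠ c)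
    (h1 : a + b + c ∈ E)
    (h2 : (a * b ^ 2 + b * c ^ 2 + c * a ^ 2 - 3 * a * b * c) /
      (a ^ 2 + b ^ 2 + c ^ 2 - a * b - b * c - c * a) ∈ E)
    (h3 : (a ^ 2 * b + b ^ 2 * c + c ^ 2 * a - 3 * a * b * c) /
      (a ^ 2 + b ^ 2 + c ^ 2 - a * b - b * c - c * a) ∈ E)
    (h4 : a' + b' + c' ∈ E) (h5 : a * a' + b * b' + c * c' ∈ E)
    (h6 : a ^ 2 * a' + b ^ 2 * b' + c ^ 2 * c' ∈ E) (m : ℕ)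
    (hm : Module.rank ↥(E ⊔ IntermediateField.adjoin K {a, b, c, a', b', c'}) M ≤ m) :
    Module.rank ↥E M ≤ ((3 * m : ℕ) : Cardinal) := by
  have h3E : ∀ F : IntermediateField K M, (3 : M) ∈ F := fun F => by
    exact_mod_cast natCast_mem F 3
  have he2 : a * b + b * c + c * a ∈ E := by
    have e : a * b + b * c + c * a = (a + b + c) * 
      ((a * b ^ 2 + b * c ^ 2 + c * a ^ 2 - 3 * a * b * c) /
      (a ^ 2 + b ^ 2 + c ^ 2 - a * b - b * c - c * a) + (a ^ 2 * b + b ^ 2 * c + c ^ 2 * a - 3 * a * b * c) /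
      (a ^ 2 + b ^ 2 + c ^ 2 - a * b - b * c - c * a)) - 3 * (((a * b ^ 2 + b * c ^ 2 + c * a ^ 2 - 3 * a * b * c) /
      (a ^ 2 + b ^ 2 + c ^ 2 - a * b - b * c - c * a)) ^ 2 - ((a * b ^ 2 + b * c ^ 2 + c * a ^ 2 - 3 * a * b * c) /
      (a ^ 2 + b ^ 2 + c ^ 2 - a * b - b * c - c * a)) * ((a ^ 2 * b + b ^ 2 * c + c ^ 2 * a - 3 * a * b * c) /
      (a ^ 2 + b ^ 2 + c ^ 2 - a * b - b * c - c * a)) + ((a ^ 2 * b + b ^ 2 * c + c ^ 2 * a - 3 * a * b * c) /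
      (a ^ 2 + b ^ 2 + c ^ 2 - a * b - b * c - c * a)) ^ 2) := by
      refine c3_aux2 _ _ _ _ _ hD ?_
      ring
    rw [e]
    exact E.sub_mem (E.mul_mem h1 (E.add_mem h2 h3)) (E.mul_mem (h3E E)
      (E.add_mem (E.sub_mem (pow_mem h2 2) (E.mul_mem h2 h3)) (pow_mem h3 2)))
  have he3 : a * b * c ∈ E := by
    have e : a * b * c = (a + b + c) * (((a * b ^ 2 + b * c ^ 2 + c * a ^ 2 - 3 * a * b * c) /
      (a ^ 2 + b ^ 2 + c ^ 2 - a * b - b * c - c * a)) * ((a ^ 2 * b + b ^ 2 * c + c ^ 2 * a - 3 * a * b * c) /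
      (a ^ 2 + b ^ 2 + c ^ 2 - a * b - b * c - c * a))) - (((a * b ^ 2 + b * c ^ 2 + c * a ^ 2 - 3 * a * b * c) /
      (a ^ 2 + b ^ 2 + c ^ 2 - a * b - b * c - c * a)) ^ 3 + ((a ^ 2 * b + b ^ 2 * c + c ^ 2 * a - 3 * a * b * c) /
      (a ^ 2 + b ^ 2 + c ^ 2 - a * b - b * c - c * a)) ^ 3) := by
      refine c3_aux3 _ _ _ _ _ hD ?_
      ring
    rw [e]
    exact E.sub_mem (E.mul_mem h1 (E.mul_mem h2 h3)) (E.add_mem (pow_mem h2 3) (pow_mem h3 3))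
  refine degStep' E _ a 3 ![a * b * c, - (a * b + b * c + c * a), a + b + c] ?_ ?_ le_sup_left ?_ ?_ m hm
  · intro i
    fin_cases i
    · exact he3
    · exact E.neg_mem he2
    · exact h1
  · simp [Fin.sum_univ_three]
    ring
  · exact le_sup_right (a := E) (IntermediateField.subset_adjoin K _ (by simp))
  · intro F hF ha
    have hS : b + c ∈ F := by
      have : b + c = (a + b + c) - a := by ring
      rw [this]; exact F.sub_mem (hF h1) ha
    have hP : b * c ∈ F := by
      have : b * c = (a * b + b * c + c * a) - a * (b + c) := by ring
      rw [this]; exact F.sub_mem (hF he2) (F.mul_mem ha hS)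
    have hDF : a ^ 2 + b ^ 2 + c ^ 2 - a * b - b * c - c * a ∈ F := by
      have : a ^ 2 + b ^ 2 + c ^ 2 - a * b - b * c - c * a = (a + b + c) ^ 2 - 3 * (a * b + b * c + c * a) := by ring
      rw [this]; exact F.sub_mem (pow_mem (hF h1) 2) (F.mul_mem (h3E F) (hF he2))
    have hu : a * b ^ 2 + b * c ^ 2 + c * a ^ 2 - 3 * a * b * c ∈ F := by
      have := F.mul_mem (hF h2) hDF
      rwa [div_mul_cancel₀ _ hD] at this
    have hab' := sub_ne_zero.mpr hab
    have hac' := sub_ne_zero.mpr hac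
    have hbc' := sub_ne_zero.mpr hbc
    have hb : b ∈ F := by
      have : b = (a ^ 2 * (b + c) - a * (b * c) + (b * c) * (b + c) - 3 * a * (b * c)
          - (a * b ^ 2 + b * c ^ 2 + c * a ^ 2 - 3 * a * b * c)) / (a ^ 2 - a * (b + c) + b * c) := by
        have h : a ^ 2 - a * (b + c) + b * c ≠ 0 := by
          have : a ^ 2 - a * (b + c) + b * c = (a - b) * (a - c) := by ring
          rw [this]; exact mul_ne_zero hab' hac'
        rw [eq_div_iff h]; ring
      rw [this]
      refine F.div_mem (F.sub_mem (F.sub_mem (F.add_mem (F.sub_mem (F.mul_mem (pow_mem ha 2) hS) 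
        (F.mul_mem ha hP)) (F.mul_mem hP hS)) (F.mul_mem (F.mul_mem (h3E F) ha) hP)) hu) ?_
      exact F.add_mem (F.sub_mem (pow_mem ha 2) (F.mul_mem ha hS)) hP
    have hc : c ∈ F := by
      have : c = (b + c) - b := by ring
      rw [this]; exact F.sub_mem hS hb
    have solve : ∀ a b c a' b' c' : M, a - b ≠ 0 → a - c ≠ 0 → a ∈ F → b ∈ F → c ∈ F →
        a' + b' + c' ∈ F → a * a' + b * b' + c * c' ∈ F → a ^ 2 * a' + b ^ 2 * b' + c ^ 2 * c' ∈ F →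
        a' ∈ F := by
      intro a b c a' b' c' hab hac ha hb hc h4 h5 h6
      have : a' = ((a ^ 2 * a' + b ^ 2 * b' + c ^ 2 * c') - (b + c) * (a * a' + b * b' + c * c') +
        b * c * (a' + b' + c')) / ((a - b) * (a - c)) := by
        rw [eq_div_iff (mul_ne_zero hab hac)]; ring
      rw [this]
      exact F.div_mem (F.add_mem (F.sub_mem h6 (F.mul_mem (F.add_mem hb hc) h5))
        (F.mul_mem (F.mul_mem hb hc) h4)) (F.mul_mem (F.sub_mem ha hb) (F.sub_mem ha hc))
    have ha' := solve a b c a' b' c' hab' hac' ha hb hc (hF h4) (hF h5) (hF h6)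
    have hb' := solve b a c b' a' c' (sub_ne_zero.mpr hab.symm) hbc' hb ha hc
      (by convert hF h4 using 1; ring) (by convert hF h5 using 1; ring) (by convert hF h6 using 1; ring)
    have hc' := solve c b a c' b' a' (sub_ne_zero.mpr hbc.symm) (sub_ne_zero.mpr hac.symm) hc hb ha
      (by convert hF h4 using 1; ring) (by convert hF h5 using 1; ring) (by convert hF h6 using 1; ring)
    refine sup_le hF ?_
    rw [IntermediateField.adjoin_le_iff]
    rintro x (rfl | rfl | rfl | rfl | rfl | rfl) <;> assumption

theorem permHom_X (K : Type) [Field K] (s : Equiv.Perm (Fin 8)) (i : Fin 8) :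
    permHom K (Fin 8) s (Xvar K (Fin 8) i) = Xvar K (Fin 8) (s i) := by
  simp [permHom, renameHom, Xvar]

theorem Xvar_inj (K : Type) [Field K] : Function.Injective (Xvar K (Fin 8)) := by
  intro i j h
  exact MvPolynomial.X_injective (IsFractionRing.injective (MvPolynomial (Fin 8) K) (RFF K (Fin 8)) h)

theorem permHom_inj (K : Type) [Field K] : Function.Injective (permHom K (Fin 8)) := by
  intro s t h
  ext1 i
  apply Xvar_inj K
  rw [← permHom_X, ← permHom_X, h]

abbrev gS1 : Equiv.Perm (Fin 8) := Equiv.swap (0 : Fin 8) 1 * Equiv.swap 2 3 * Equiv.swap 4 5 * Equiv.swap 6 7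
abbrev gS2 : Equiv.Perm (Fin 8) := Equiv.swap (0 : Fin 8) 2 * Equiv.swap 1 3 * Equiv.swap 4 6 * Equiv.swap 5 7
abbrev gK : Equiv.Perm (Fin 8) := Equiv.swap (0 : Fin 8) 4 * Equiv.swap 1 5 * Equiv.swap 2 6 * Equiv.swap 3 7
abbrev gT : Equiv.Perm (Fin 8) := Equiv.swap (1 : Fin 8) 2 * Equiv.swap 2 6 * Equiv.swap 6 3 * Equiv.swap 3 4 * Equiv.swap 4 5 * Equiv.swap 5 7
abbrev gP : Equiv.Perm (Fin 8) := (Equiv.swap (1 : Fin 8) 2 * Equiv.swap 2 3) * (Equiv.swap (6 : Fin 8) 5 * Equiv.swap 5 4)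

set_option maxRecDepth 100000 in
theorem card_G36 : 168 ≤ Nat.card ↥(Subgroup.closure {gS1, gS2, gK, gT, gP}) := by
  set G := Subgroup.closure {gS1, gS2, gK, gT, gP} with hG
  have m1 : gS1 ∈ G := Subgroup.subset_closure (by simp)
  have m2 : gS2 ∈ G := Subgroup.subset_closure (by simp)
  have m3 : gK ∈ G := Subgroup.subset_closure (by simp)
  have m4 : gT ∈ G := Subgroup.subset_closure (by simp)
  have m5 : gP ∈ G := Subgroup.subset_closure (by simp)
  have d7 : 7 ∣ Nat.card G := by
    have : orderOf gT = 7 := by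
      have := Fact.mk (by norm_num : Nat.Prime 7)
      exact orderOf_eq_prime (by decide) (by decide)
    rw [← this, ← Subgroup.orderOf_mk gT m4]
    exact orderOf_dvd_natCard _
  have d3 : 3 ∣ Nat.card G := by
    have : orderOf gP = 3 := by
      have := Fact.mk (by norm_num : Nat.Prime 3)
      exact orderOf_eq_prime (by decide) (by decide)
    rw [← this, ← Subgroup.orderOf_mk gP m5]
    exact orderOf_dvd_natCard _
  have d8 : 8 ∣ Nat.card G := by
    have ho : MulAction.orbit G (0 : Fin 8) = Set.univ := by
      rw [Set.eq_univ_iff_forall]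
      intro i
      have : ∃ g ∈ G, g 0 = i := by
        fin_cases i
        · exact ⟨1, G.one_mem, by decide⟩
        · exact ⟨gS1, m1, by decide⟩
        · exact ⟨gS2, m2, by decide⟩
        · exact ⟨gS1 * gS2, G.mul_mem m1 m2, by decide⟩
        · exact ⟨gK, m3, by decide⟩
        · exact ⟨gS1 * gK, G.mul_mem m1 m3, by decide⟩
        · exact ⟨gS2 * gK, G.mul_mem m2 m3, by decide⟩
        · exact ⟨gS1 * gS2 * gK, G.mul_mem (G.mul_mem m1 m2) m3, by decide⟩
      obtain ⟨g, hg, rfl⟩ := this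
      exact ⟨⟨g, hg⟩, rfl⟩
    have := Nat.card_congr (MulAction.orbitProdStabilizerEquivGroup G (0 : Fin 8))
    rw [Nat.card_prod, ho] at this
    rw [← this]
    refine Dvd.dvd.mul_right ?_ _
    simp
  have : 8 * 7 * 3 ∣ Nat.card G := by
    refine Nat.Coprime.mul_dvd_of_dvd_of_dvd (by norm_num) ?_ d3
    exact Nat.Coprime.mul_dvd_of_dvd_of_dvd (by norm_num) d8 d7
  exact Nat.le_of_dvd Nat.card_pos this

theorem finish_G36 (K : Type) [Field K] (f : Fin 8 → RFF K (Fin 8))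
    (hr : Module.rank ↥(IntermediateField.adjoin K (Set.range f)) (RFF K (Fin 8)) ≤ ((168 : ℕ) : Cardinal))
    (hinv : ∀ g ∈ ({gS1, gS2, gK, gT, gP} : Set (Equiv.Perm (Fin 8))), ∀ i, permHom K (Fin 8) g (f i) = f i) :
    IsRatExt K ↥(fixedSub K (Fin 8) (Subgroup.closure {gS1, gS2, gK, gT, gP})) := by
  set G := Subgroup.closure {gS1, gS2, gK, gT, gP} with hG
  have hfix : ∀ i, f i ∈ fixedSub K (Fin 8) G := by
    intro i
    rw [fixedSub, IntermediateField.mem_fixedField_iff]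
    rintro _ ⟨g, hg, rfl⟩
    induction hg using Subgroup.closure_induction with
    | mem g hg => exact hinv g hg i
    | one => simp
    | mul a b _ _ ha hb => 
      rw [map_mul, AlgEquiv.mul_apply, hb, ha]
    | inv a _ ha =>
      rw [map_inv]
      nth_rw 1 [← ha]
      exact (permHom K (Fin 8) a).symm_apply_apply (f i)
  have hle : IntermediateField.adjoin K (Set.range f) ≤ fixedSub K (Fin 8) G := by
    rw [IntermediateField.adjoin_le_iff]
    rintro _ ⟨i, rfl⟩
    exact hfix i
  have hfin : Module.Finite ↥(IntermediateField.adjoin K (Set.range f)) (RFF K (Fin 8)) :=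
    Module.rank_lt_aleph0_iff.mp (lt_of_le_of_lt hr Cardinal.natCast_lt_aleph0)
  have hcard : Module.finrank ↥(fixedSub K (Fin 8) G) (RFF K (Fin 8)) = Nat.card G := by
    have : Finite ↥(G.map (permHom K (Fin 8))) :=
      Finite.of_surjective _ (MonoidHom.subgroupMap_surjective (permHom K (Fin 8)) G)
    have := Fintype.ofFinite ↥(G.map (permHom K (Fin 8)))
    have h1 := FixedPoints.finrank_eq_card ↥(G.map (permHom K (Fin 8))) (RFF K (Fin 8))
    rw [← Nat.card_eq_fintype_card, Subgroup.card_map_of_injective (permHom_inj K)] at h1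
    exact h1
  have heq : IntermediateField.adjoin K (Set.range f) = fixedSub K (Fin 8) G := by
    apply IntermediateField.eq_of_le_of_finrank_le' hle
    rw [hcard]
    refine le_trans ?_ card_G36
    exact Module.finrank_le_of_rank_le hr
  refine ⟨8, fun i => ⟨f i, hfix i⟩, ?_, ?_⟩
  · have := rff_algIndep f 168 hr
    exact AlgebraicIndependent.of_comp (fixedSub K (Fin 8) G).val this
  · apply IntermediateField.lift_injective
    rw [IntermediateField.lift_top, IntermediateField.lift_adjoin]
    refine Eq.trans ?_ heq
    congr 1
    rw [← Set.range_comp]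
    rfl

theorem stage2 (K : Type) [Field K] (a b c a' b' c' p q : RFF K (Fin 8))
    (hr : Module.rank ↥(IntermediateField.adjoin K (Set.range ![a, b, c, a', b', c', p, q]))
      (RFF K (Fin 8)) ≤ ((56 : ℕ) : Cardinal))
    (hinv : ∀ g ∈ ({gS1, gS2, gK, gT} : Set (Equiv.Perm (Fin 8))), ∀ i,
      permHom K (Fin 8) g (![a, b, c, a', b', c', p, q] i) = ![a, b, c, a', b', c', p, q] i)
    (hP : ∀ i, permHom K (Fin 8) gP (![a, b, c, a', b', c', p, q] i) =
      ![b, c, a, b', c', a', p, q] i) :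
    IsRatExt K ↥(fixedSub K (Fin 8) (Subgroup.closure {gS1, gS2, gK, gT, gP})) := by
  have hind := rff_algIndep _ 56 hr
  have hinj := hind.injective
  have hab : a ≠ b := fun h => absurd (@hinj 0 1 h) (by decide)
  have hac : a ≠ c := fun h => absurd (@hinj 0 2 h) (by decide)
  have hbc : b ≠ c := fun h => absurd (@hinj 1 2 h) (by decide)
  have hD : a ^ 2 + b ^ 2 + c ^ 2 - a * b - b * c - c * a ≠ 0 := by
    intro h
    let P : MvPolynomial (Fin 8) K := MvPolynomial.X 0 ^ 2 + MvPolynomial.X 1 ^ 2 + MvPolynomial.X 2 ^ 2 -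
      MvPolynomial.X 0 * MvPolynomial.X 1 - MvPolynomial.X 1 * MvPolynomial.X 2 - MvPolynomial.X 2 * MvPolynomial.X 0
    have h0 : MvPolynomial.aeval ![a, b, c, a', b', c', p, q] P = 0 := by
      simpa [P] using h
    have hP0 : P = 0 := (injective_iff_map_eq_zero _).mp hind P h0
    have := congrArg (MvPolynomial.eval (fun i : Fin 8 => if i = 0 then (1 : K) else 0)) hP0
    simp [P] at this
  set D := a ^ 2 + b ^ 2 + c ^ 2 - a * b - b * c - c * a with hDd
  refine finish_G36 K ![a + b + c, (a * b ^ 2 + b * c ^ 2 + c * a ^ 2 - 3 * a * b * c) / D,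
    (a ^ 2 * b + b ^ 2 * c + c ^ 2 * a - 3 * a * b * c) / D, a' + b' + c', a * a' + b * b' + c * c',
    a ^ 2 * a' + b ^ 2 * b' + c ^ 2 * c', p, q] ?_ ?_
  · set f := ![a + b + c, (a * b ^ 2 + b * c ^ 2 + c * a ^ 2 - 3 * a * b * c) / D,
    (a ^ 2 * b + b ^ 2 * c + c ^ 2 * a - 3 * a * b * c) / D, a' + b' + c', a * a' + b * b' + c * c',
    a ^ 2 * a' + b ^ 2 * b' + c ^ 2 * c', p, q] with hf
    have hmem : ∀ i, f i ∈ IntermediateField.adjoin K (Set.range f) := fun i =>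
      IntermediateField.subset_adjoin K _ ⟨i, rfl⟩
    refine c3_step _ a b c a' b' c' hD hab hac hbc (hmem 0) (hmem 1) (hmem 2) (hmem 3) (hmem 4) (hmem 5) 56 ?_
    have hE : IntermediateField.adjoin K (Set.range f) ⊔ IntermediateField.adjoin K {a, b, c, a', b', c'} =
        IntermediateField.adjoin K (Set.range ![a, b, c, a', b', c', p, q]) := by
      set E := IntermediateField.adjoin K (Set.range ![a, b, c, a', b', c', p, q]) with hE
      have hm : ∀ i, ![a, b, c, a', b', c', p, q] i ∈ E := fun i =>
        IntermediateField.subset_adjoin K _ ⟨i, rfl⟩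
      have m0 : a ∈ E := hm 0
      have m1 : b ∈ E := hm 1
      have m2 : c ∈ E := hm 2
      have m3 : a' ∈ E := hm 3
      have m4 : b' ∈ E := hm 4
      have m5 : c' ∈ E := hm 5
      have m6 : p ∈ E := hm 6
      have m7 : q ∈ E := hm 7
      have mt : (3 : RFF K (Fin 8)) ∈ E := by exact_mod_cast natCast_mem E 3
      have mD : D ∈ E := by
        rw [hDd]
        exact E.sub_mem (E.sub_mem (E.sub_mem (E.add_mem (E.add_mem (pow_mem m0 2) (pow_mem m1 2)) (pow_mem m2 2))
          (E.mul_mem m0 m1)) (E.mul_mem m1 m2)) (E.mul_mem m2 m0)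
      apply le_antisymm
      · refine sup_le ?_ ?_
        · rw [IntermediateField.adjoin_le_iff]
          rintro _ ⟨i, rfl⟩
          fin_cases i
          · exact E.add_mem (E.add_mem m0 m1) m2
          · exact E.div_mem (E.sub_mem (E.add_mem (E.add_mem (E.mul_mem m0 (pow_mem m1 2)) (E.mul_mem m1 (pow_mem m2 2)))
              (E.mul_mem m2 (pow_mem m0 2))) (E.mul_mem (E.mul_mem (E.mul_mem mt m0) m1) m2)) mD
          · exact E.div_mem (E.sub_mem (E.add_mem (E.add_mem (E.mul_mem (pow_mem m0 2) m1) (E.mul_mem (pow_mem m1 2) m2))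
              (E.mul_mem (pow_mem m2 2) m0)) (E.mul_mem (E.mul_mem (E.mul_mem mt m0) m1) m2)) mD
          · exact E.add_mem (E.add_mem m3 m4) m5
          · exact E.add_mem (E.add_mem (E.mul_mem m0 m3) (E.mul_mem m1 m4)) (E.mul_mem m2 m5)
          · exact E.add_mem (E.add_mem (E.mul_mem (pow_mem m0 2) m3) (E.mul_mem (pow_mem m1 2) m4))
              (E.mul_mem (pow_mem m2 2) m5)
          · exact m6
          · exact m7
        · rw [IntermediateField.adjoin_le_iff]
          rintro x (rfl | rfl | rfl | rfl | rfl | rfl) <;> assumption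
      · rw [hE, IntermediateField.adjoin_le_iff]
        have hs : ∀ x ∈ ({a, b, c, a', b', c'} : Set (RFF K (Fin 8))),
            x ∈ IntermediateField.adjoin K (Set.range f) ⊔ IntermediateField.adjoin K {a, b, c, a', b', c'} :=
          fun x hx => le_sup_right (a := IntermediateField.adjoin K (Set.range f))
            (IntermediateField.subset_adjoin K _ hx)
        rintro _ ⟨i, rfl⟩
        fin_cases i
        · exact hs a (by simp)
        · exact hs b (by simp)
        · exact hs c (by simp)
        · exact hs a' (by simp)
        · exact hs b' (by simp)
        · exact hs c' (by simp)
        · exact le_sup_left (a := IntermediateField.adjoin K (Set.range f)) (hmem 6)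
        · exact le_sup_left (a := IntermediateField.adjoin K (Set.range f)) (hmem 7)
    rw [hE]
    exact hr
  · intro g hg i
    have hcase : (∀ i, permHom K (Fin 8) g (![a, b, c, a', b', c', p, q] i) = ![a, b, c, a', b', c', p, q] i) ∨
        (∀ i, permHom K (Fin 8) g (![a, b, c, a', b', c', p, q] i) = ![b, c, a, b', c', a', p, q] i) := by
      rcases hg with rfl | rfl | rfl | rfl | rfl
      · exact Or.inl (hinv _ (by simp))
      · exact Or.inl (hinv _ (by simp))
      · exact Or.inl (hinv _ (by simp))
      · exact Or.inl (hinv _ (by simp))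
      · exact Or.inr hP
    generalize permHom K (Fin 8) g = T at hcase
    rcases hcase with h | h
    all_goals
      have h0 := h 0
      have h1 := h 1
      have h2 := h 2
      have h3 := h 3
      have h4 := h 4
      have h5 := h 5
      have h6 := h 6
      have h7 := h 7
      have ht : T 3 = 3 := map_ofNat T 3
      simp only [Matrix.cons_val] at h0 h1 h2 h3 h4 h5 h6 h7
    · rw [hDd]
      fin_cases i <;> simp only [Fin.zero_eta, Fin.mk_one, Fin.reduceFinMk, Matrix.cons_val, map_add, map_sub, map_mul, map_div₀, map_pow, h0, h1, h2, h3, h4, h5, h6, h7, ht]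
    · have hDT : T D = D := by
        rw [hDd]
        simp only [map_add, map_sub, map_mul, map_pow, h0, h1, h2]
        ring
      fin_cases i <;> simp only [Fin.zero_eta, Fin.mk_one, Fin.reduceFinMk, Matrix.cons_val, map_add, map_sub, map_mul, map_div₀, map_pow, h0, h1, h2, h3, h4, h5, h6, h7, ht, hDT]
      all_goals first | done | ring1 | (congr 1; ring1)

theorem stageI (K K' : Type) [Field K] [Field K'] [Algebra K K']
    (gen : (M : Type) → [Field M] → (Fin 8 → M) → Fin 8 → M)
    (nat : ∀ (M M' : Type) [Field M] [Field M'] (f : M →+* M') (x : Fin 8 → M),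
      gen M' (fun a => f (x a)) = fun i => f (gen M x i))
    (hinv : ∀ g ∈ ({gS1, gS2, gK, gT} : Set (Equiv.Perm (Fin 8))), ∀ x : Fin 8 → RFF K (Fin 8),
      gen _ (fun a => x (g a)) = gen _ x)
    (hP : ∀ x : Fin 8 → RFF K (Fin 8), ∀ i, gen _ (fun a => x (gP a)) i =
      gen _ x (![1, 2, 0, 4, 5, 3, 6, 7] i))
    (hr : Module.rank ↥(IntermediateField.adjoin K' (Set.range (gen _ (Xvar K' (Fin 8)))))
      (RFF K' (Fin 8)) ≤ ((56 : ℕ) : Cardinal)) :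
    IsRatExt K ↥(fixedSub K (Fin 8) (Subgroup.closure {gS1, gS2, gK, gT, gP})) := by
  set g := gen _ (Xvar K (Fin 8)) with hg
  have hgv : ![g 0, g 1, g 2, g 3, g 4, g 5, g 6, g 7] = g := by
    funext i; fin_cases i <;> rfl
  have key : ∀ (s : Equiv.Perm (Fin 8)) i, permHom K (Fin 8) s (g i) =
      gen _ (fun a => Xvar K (Fin 8) (s a)) i := by
    intro s i
    have := congrFun (nat _ _ (permHom K (Fin 8) s : RFF K (Fin 8) →+* RFF K (Fin 8)) (Xvar K (Fin 8))) i
    rw [hg]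
    refine Eq.trans this.symm ?_
    congr 1
    funext a
    exact permHom_X K s a
  refine stage2 K (g 0) (g 1) (g 2) (g 3) (g 4) (g 5) (g 6) (g 7) ?_ ?_ ?_
  · rw [hgv]
    refine rff_descent K K' g 56 ?_
    have : (fun i => rffMap K K' (g i)) = gen _ (Xvar K' (Fin 8)) := by
      rw [hg, ← nat]
      congr 1
      funext a
      simp [Xvar, rffMap_algebraMap]
    rw [this]
    exact hr
  · intro s hs i
    rw [hgv, key, hinv s hs]
  · intro i
    have e : permHom K (Fin 8) gP (![g 0, g 1, g 2, g 3, g 4, g 5, g 6, g 7] i) =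
      g (![1, 2, 0, 4, 5, 3, 6, 7] i) := by rw [hgv, key, hP]
    rw [e]
    fin_cases i <;> rfl

theorem nonvanish (K : Type) [Field K] (P : MvPolynomial (Fin 8) K) (pt : Fin 8 → K)
    (h : MvPolynomial.eval pt P ≠ 0) : algebraMap (MvPolynomial (Fin 8) K) (RFF K (Fin 8)) P ≠ 0 := by
  intro h0
  apply h
  have : P = 0 := by
    apply IsFractionRing.injective (MvPolynomial (Fin 8) K) (RFF K (Fin 8))
    rw [h0, map_zero]
  rw [this, map_zero]

theorem adjoin_Xvar (K : Type) [Field K] : IntermediateField.adjoin K (Set.range (Xvar K (Fin 8))) = ⊤ := by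
  rw [eq_top_iff]
  intro r _
  obtain ⟨a, b, hb, rfl⟩ := IsFractionRing.div_surjective (A := MvPolynomial (Fin 8) K) r
  set E := IntermediateField.adjoin K (Set.range (Xvar K (Fin 8)))
  have key : ∀ P : MvPolynomial (Fin 8) K, algebraMap (MvPolynomial (Fin 8) K) (RFF K (Fin 8)) P ∈ E := by
    intro P
    induction P using MvPolynomial.induction_on with
    | C c =>
      exact E.algebraMap_mem c
    | add p q hp hq => rw [map_add]; exact E.add_mem hp hq
    | mul_X p i hp =>
      rw [map_mul]
      exact E.mul_mem hp (IntermediateField.subset_adjoin K _ ⟨i, rfl⟩)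
  exact E.div_mem (key a) (key b)

def parb (n : ℕ) : Bool := xor (n.testBit 0) (xor (n.testBit 1) (n.testBit 2))
def cs (i : ZMod 7) : ℕ := (![4, 1, 7, 3, 2, 5, 6] : Fin 7 → ℕ) i
def sgn (i : ZMod 7) (a : Fin 8) : ℤ := if parb (cs i &&& a.val) then -1 else 1

def yv {M : Type} [CommRing M] (x : Fin 8 → M) (i : ZMod 7) : M := ∑ a, (sgn i a : M) * x a
def zv {M : Type} [CommRing M] (x : Fin 8 → M) (i : ZMod 7) : M :=
  yv x (i + 3) * yv x (i + 5) * yv x (i + 6)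
def sv {M : Type} [CommRing M] (x : Fin 8 → M) : M := ∑ i, zv x i
def wv {M : Type} [CommRing M] (x : Fin 8 → M) : M := ∏ i, yv x i
def tv {M : Type} [CommRing M] (x : Fin 8 → M) : M := ∑ a, x a

section
variable {M M' : Type} [CommRing M] [CommRing M'] (f : M →+* M') (x : Fin 8 → M)

theorem yv_map (i : ZMod 7) : yv (fun a => f (x a)) i = f (yv x i) := by
  simp [yv, map_sum]
theorem zv_map (i : ZMod 7) : zv (fun a => f (x a)) i = f (zv x i) := by
  simp [zv, yv_map]
theorem sv_map : sv (fun a => f (x a)) = f (sv x) := by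
  simp [sv, zv_map, map_sum]
theorem wv_map : wv (fun a => f (x a)) = f (wv x) := by
  simp [wv, yv_map, map_prod]
theorem tv_map : tv (fun a => f (x a)) = f (tv x) := by
  simp [tv, map_sum]

theorem tv_perm (g : Equiv.Perm (Fin 8)) : tv (fun a => x (g a)) = tv x :=
  Equiv.sum_comp g x

theorem yv_perm (g : Equiv.Perm (Fin 8)) (i j : ZMod 7) (c : ℤ) (h : ∀ a, sgn i a = c * sgn j (g a)) :
    yv (fun a => x (g a)) i = c * yv x j := by
  rw [yv, yv, ← Equiv.sum_comp g (fun a => (sgn j a : M) * x a), Finset.mul_sum]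
  refine Finset.sum_congr rfl fun a _ => ?_
  rw [h a]
  push_cast
  ring

theorem zv_N (g : Equiv.Perm (Fin 8)) (hg : g ∈ ({gS1, gS2, gK} : Set (Equiv.Perm (Fin 8)))) (i : ZMod 7) :
    zv (fun a => x (g a)) i = zv x i := by
  have h : ∀ j a, sgn j a = sgn j (g 0) * sgn j (g a) := by
    rcases hg with rfl | rfl | rfl <;> decide
  have h3 : sgn (i+3) (g 0) * sgn (i+5) (g 0) * sgn (i+6) (g 0) = 1 := by
    rcases hg with rfl | rfl | rfl <;> revert i <;> decide
  simp only [zv, fun j => yv_perm x g j j _ (h j)]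
  have h3' : (sgn (i+3) (g 0) * sgn (i+5) (g 0) * sgn (i+6) (g 0) : M) = 1 := by
    have := congrArg (Int.cast : ℤ → M) h3
    push_cast at this
    exact this
  linear_combination (yv x (i + 3) * yv x (i + 5) * yv x (i + 6)) * h3'

theorem wv_N (g : Equiv.Perm (Fin 8)) (hg : g ∈ ({gS1, gS2, gK} : Set (Equiv.Perm (Fin 8)))) :
    wv (fun a => x (g a)) = wv x := by
  have h : ∀ j a, sgn j a = sgn j (g 0) * sgn j (g a) := by
    rcases hg with rfl | rfl | rfl <;> decide
  have h3 : ∏ j, sgn j (g 0) = 1 := by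
    rcases hg with rfl | rfl | rfl <;> decide
  simp only [wv, fun j => yv_perm x g j j _ (h j)]
  rw [Finset.prod_mul_distrib]
  have h3' : (∏ j, (sgn j (g 0) : M)) = 1 := by
    have := congrArg (Int.cast : ℤ → M) h3
    push_cast at this
    exact this
  rw [h3', one_mul]

theorem yv_T (i : ZMod 7) : yv (fun a => x (gT a)) i = yv x (i + 1) := by
  rw [yv_perm x gT i (i + 1) 1 (by revert i; decide)]; simp
theorem yv_P (i : ZMod 7) : yv (fun a => x (gP a)) i = yv x (2 * i) := by
  rw [yv_perm x gP i (2 * i) 1 (by revert i; decide)]; simp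
theorem zv_T (i : ZMod 7) : zv (fun a => x (gT a)) i = zv x (i + 1) := by
  simp only [zv, yv_T]
  ring_nf
theorem zv_P (i : ZMod 7) : zv (fun a => x (gP a)) i = zv x (2 * i) := by
  simp only [zv, yv_P, mul_add]
  have h1 : (2 * 3 : ZMod 7) = 6 := by decide
  have h2 : (2 * 5 : ZMod 7) = 3 := by decide
  have h3 : (2 * 6 : ZMod 7) = 5 := by decide
  rw [h1, h2, h3]
  ring
theorem sv_N (g : Equiv.Perm (Fin 8)) (hg : g ∈ ({gS1, gS2, gK} : Set (Equiv.Perm (Fin 8)))) :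
    sv (fun a => x (g a)) = sv x := by
  simp only [sv, zv_N x g hg]
theorem sv_T : sv (fun a => x (gT a)) = sv x := by
  simp only [sv, zv_T]
  exact Equiv.sum_comp (Equiv.addRight (1 : ZMod 7)) (zv x)
def dbl : ZMod 7 ≃ ZMod 7 where
  toFun i := 2 * i
  invFun i := 4 * i
  left_inv := by decide
  right_inv := by decide
theorem sv_P : sv (fun a => x (gP a)) = sv x := by
  simp only [sv, zv_P]
  exact Equiv.sum_comp dbl (zv x)
theorem wv_T : wv (fun a => x (gT a)) = wv x := by
  simp only [wv, yv_T]
  exact Equiv.prod_comp (Equiv.addRight (1 : ZMod 7)) (yv x)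
theorem wv_P : wv (fun a => x (gP a)) = wv x := by
  simp only [wv, yv_P]
  exact Equiv.prod_comp dbl (yv x)

theorem sum7 {A : Type} [AddCommMonoid A] (f : ZMod 7 → A) :
    ∑ i, f i = f 0 + f 1 + f 2 + f 3 + f 4 + f 5 + f 6 :=
  Fin.sum_univ_seven f
theorem prod7 {A : Type} [CommMonoid A] (f : ZMod 7 → A) :
    ∏ i, f i = f 0 * f 1 * f 2 * f 3 * f 4 * f 5 * f 6 :=
  Fin.prod_univ_seven f

theorem z_def (x : Fin 8 → M) :
    zv x 0 = yv x 3 * yv x 5 * yv x 6 ∧ zv x 1 = yv x 4 * yv x 6 * yv x 0 ∧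
    zv x 2 = yv x 5 * yv x 0 * yv x 1 ∧ zv x 3 = yv x 6 * yv x 1 * yv x 2 ∧
    zv x 4 = yv x 0 * yv x 2 * yv x 3 ∧ zv x 5 = yv x 1 * yv x 3 * yv x 4 ∧
    zv x 6 = yv x 2 * yv x 4 * yv x 5 := by
  refine ⟨?_, ?_, ?_, ?_, ?_, ?_, ?_⟩ <;> rfl

theorem x_inv (a : Fin 8) : 8 * x a = tv x + ∑ i, (sgn i a : M) * yv x i := by
  have h : ∀ a b, (1 : ℤ) + ∑ i, sgn i a * sgn i b = if b = a then 8 else 0 := by decide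
  have h' : ∀ b, (1 : M) + ∑ i, (sgn i a : M) * sgn i b = if b = a then 8 else 0 := by
    intro b
    have := congrArg (Int.cast : ℤ → M) (h a b)
    push_cast at this
    rw [this]
  simp only [tv, yv, Finset.mul_sum]
  rw [Finset.sum_comm, ← Finset.sum_add_distrib]
  have : ∀ b, x b + ∑ i, (sgn i a : M) * ((sgn i b : M) * x b) = if b = a then 8 * x b else 0 := by
    intro b
    have e : x b + ∑ i, (sgn i a : M) * ((sgn i b : M) * x b) =
        ((1 : M) + ∑ i, (sgn i a : M) * sgn i b) * x b := by
      rw [add_mul, Finset.sum_mul, one_mul]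
      congr 1
      exact Finset.sum_congr rfl fun i _ => by ring
    rw [e, h' b]
    split_ifs <;> simp
  simp [this]
end

theorem chain8 {K M : Type} [Field K] [Field M] [Algebra K M] (x : Fin 8 → M)
    (hx : IntermediateField.adjoin K (Set.range x) = ⊤) (h2 : (2 : M) ≠ 0)
    (hy : ∀ i, yv x i ≠ 0) (hs : sv x ≠ 0) (E : IntermediateField K M)
    (hZ : ∀ i, zv x i / sv x ∈ E) (hq : wv x / sv x ^ 2 ∈ E) (hp : tv x ∈ E) :
    Module.rank ↥E M ≤ ((8 : ℕ) : Cardinal) := by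
  obtain ⟨z0, z1, z2, z3, z4, z5, z6⟩ := z_def x
  have hw : wv x ≠ 0 := Finset.prod_ne_zero_iff.mpr fun i _ => hy i
  have hz : ∀ i, zv x i ≠ 0 := fun i => mul_ne_zero (mul_ne_zero (hy _) (hy _)) (hy _)
  have hpz : ∏ i, zv x i = wv x ^ 3 := by
    rw [wv, prod7, prod7, z0, z1, z2, z3, z4, z5, z6]; ring
  have sE : sv x ∈ E := by
    have : sv x = (wv x / sv x ^ 2) ^ 3 / ∏ i, (zv x i / sv x) := by
      rw [Finset.prod_div_distrib, hpz, Finset.prod_const, Finset.card_univ, ZMod.card]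
      field_simp
    rw [this]
    exact E.div_mem (pow_mem hq 3) (prod_mem fun i _ => hZ i)
  have zE : ∀ i, zv x i ∈ E := fun i => by
    have : zv x i = zv x i / sv x * sv x := by field_simp
    rw [this]; exact E.mul_mem (hZ i) sE
  have wE : wv x ∈ E := by
    have : wv x = wv x / sv x ^ 2 * sv x ^ 2 := by field_simp
    rw [this]; exact E.mul_mem hq (pow_mem sE 2)
  have q0 : yv x 0 ^ 2 ∈ E := by
    have : yv x 0 ^ 2 = zv x 1 * zv x 2 * zv x 4 / wv x := by
      rw [eq_div_iff hw, wv, prod7, z1, z2, z4]; ring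
    rw [this]; exact E.div_mem (E.mul_mem (E.mul_mem (zE _) (zE _)) (zE _)) wE
  have q1 : yv x 1 ^ 2 ∈ E := by
    have : yv x 1 ^ 2 = zv x 2 * zv x 3 * zv x 5 / wv x := by
      rw [eq_div_iff hw, wv, prod7, z2, z3, z5]; ring
    rw [this]; exact E.div_mem (E.mul_mem (E.mul_mem (zE _) (zE _)) (zE _)) wE
  have q2 : yv x 2 ^ 2 ∈ E := by
    have : yv x 2 ^ 2 = zv x 3 * zv x 4 * zv x 6 / wv x := by
      rw [eq_div_iff hw, wv, prod7, z3, z4, z6]; ring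
    rw [this]; exact E.div_mem (E.mul_mem (E.mul_mem (zE _) (zE _)) (zE _)) wE
  have step : ∀ (F : IntermediateField K M) (a : M) (m : ℕ), a ^ 2 ∈ F →
      Module.rank ↥(F ⊔ IntermediateField.adjoin K {a}) M ≤ m →
      Module.rank ↥F M ≤ ((2 * m : ℕ) : Cardinal) := by
    intro F a m h hm
    refine degStep F a 2 ![a ^ 2, 0] ?_ ?_ m hm
    · intro i; fin_cases i
      · exact h
      · exact F.zero_mem
    · simp
  have hsub : ∀ (F : IntermediateField K M) (a : M), a ∈ F ⊔ IntermediateField.adjoin K {a} := fun F a =>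
    le_sup_right (a := F) (IntermediateField.subset_adjoin K _ (by simp))
  refine step E (yv x 0) 4 q0 (step _ (yv x 1) 2 (le_sup_left (a := E) q1) (step _ (yv x 2) 1
    (le_sup_left (a := E ⊔ IntermediateField.adjoin K {yv x 0}) (le_sup_left (a := E) q2)) ?_))
  set F0 := E ⊔ IntermediateField.adjoin K {yv x 0} with hF0
  set F1 := F0 ⊔ IntermediateField.adjoin K {yv x 1} with hF1
  set F := F1 ⊔ IntermediateField.adjoin K {yv x 2} with hF
  have l1 : F1 ≤ F := le_sup_left
  have l0 : F0 ≤ F := le_trans le_sup_left l1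
  have le : E ≤ F := le_trans le_sup_left l0
  have m0 : yv x 0 ∈ F := l0 (hsub E _)
  have m1 : yv x 1 ∈ F := l1 (hsub F0 _)
  have m2 : yv x 2 ∈ F := hsub F1 _
  have lz : ∀ i, zv x i ∈ F := fun i => le (zE i)
  have third : ∀ a b c z : M, z = a * b * c → z ∈ F → a ∈ F → b ∈ F → a ≠ 0 → b ≠ 0 → c ∈ F := by
    intro a b c z h hz ha hb ha0 hb0
    have : c = z / (a * b) := by rw [h]; field_simp
    rw [this]; exact F.div_mem hz (F.mul_mem ha hb)
  have m5 : yv x 5 ∈ F := third _ _ _ _ (by rw [z2]; ring) (lz 2) m0 m1 (hy _) (hy _)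
  have m3 : yv x 3 ∈ F := third _ _ _ _ z4 (lz 4) m0 m2 (hy _) (hy _)
  have m6 : yv x 6 ∈ F := third _ _ _ _ (by rw [z3]; ring) (lz 3) m1 m2 (hy _) (hy _)
  have m4 : yv x 4 ∈ F := third _ _ _ _ (by rw [z1]; ring) (lz 1) m6 m0 (hy _) (hy _)
  have my : ∀ i, yv x i ∈ F := by
    intro i
    change Fin 7 at i
    fin_cases i <;> assumption
  have htop : F = ⊤ := by
    rw [eq_top_iff, ← hx, IntermediateField.adjoin_le_iff]
    rintro _ ⟨a, rfl⟩
    have h8 : (8 : M) ≠ 0 := by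
      have : (8 : M) = 2 ^ 3 := by norm_num
      rw [this]; exact pow_ne_zero 3 h2
    have : x a = (tv x + ∑ i, (sgn i a : M) * yv x i) / (8 : ℕ) := by
      push_cast
      rw [eq_div_iff h8, ← x_inv]; ring
    rw [this]
    exact F.div_mem (F.add_mem (le hp) (sum_mem fun i _ => F.mul_mem (intCast_mem F _) (my i))) (natCast_mem F 8)
  rw [htop]
  simp

theorem y_ne (K : Type) [Field K] (h2 : (2 : K) ≠ 0) (i : ZMod 7) : yv (Xvar K (Fin 8)) i ≠ 0 := by
  have : yv (Xvar K (Fin 8)) i = algebraMap (MvPolynomial (Fin 8) K) (RFF K (Fin 8)) (yv MvPolynomial.X i) :=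
    yv_map _ _ i
  rw [this]
  refine nonvanish K _ (fun a => (sgn i a : K)) ?_
  rw [← yv_map]
  have h : ∀ i, ∑ a, sgn i a * sgn i a = 8 := by decide
  have := congrArg (Int.cast : ℤ → K) (h i)
  push_cast at this
  simp only [MvPolynomial.eval_X, yv, this]
  have e : (8 : K) = 2 ^ 3 := by norm_num
  rw [e]; exact pow_ne_zero 3 h2

def pt0 (a : Fin 8) : ℤ := sgn 3 a + sgn 5 a + sgn 6 a

theorem zv_pt0 (K : Type) [CommRing K] (i : ZMod 7) :
    zv (fun a => (pt0 a : K)) i = if i = 0 then 512 else 0 := by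
  have h : ∀ i, zv pt0 i = if i = 0 then 512 else 0 := by decide
  have e := zv_map (Int.castRingHom K) pt0 i
  have : zv (fun a => (pt0 a : K)) i = Int.castRingHom K (zv pt0 i) := e
  rw [this, h i]
  split_ifs <;> simp

/-- Nonvanishing of a linear form in the `z_i` with nonzero constant coefficient. -/
theorem zlin_ne (K : Type) [Field K] (h2 : (2 : K) ≠ 0) (c : ZMod 7 → K) (hc : c 0 ≠ 0) :
    ∑ i, algebraMap K (RFF K (Fin 8)) (c i) * zv (Xvar K (Fin 8)) i ≠ 0 := by
  have hz : ∀ i, zv (Xvar K (Fin 8)) i = algebraMap (MvPolynomial (Fin 8) K) (RFF K (Fin 8)) (zv MvPolynomial.X i) :=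
    fun i => zv_map _ _ i
  have : ∑ i, algebraMap K (RFF K (Fin 8)) (c i) * zv (Xvar K (Fin 8)) i =
      algebraMap (MvPolynomial (Fin 8) K) (RFF K (Fin 8)) (∑ i, MvPolynomial.C (c i) * zv MvPolynomial.X i) := by
    simp only [hz, map_sum, map_mul]
    rfl
  rw [this]
  refine nonvanish K _ (fun a => (pt0 a : K)) ?_
  simp only [map_sum, map_mul, ← zv_map, MvPolynomial.eval_X, MvPolynomial.eval_C, zv_pt0]
  simp only [mul_ite, mul_zero, Finset.sum_ite_eq', Finset.mem_univ, if_true]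
  have e : (512 : K) = 2 ^ 9 := by norm_num
  rw [e]; exact mul_ne_zero hc (pow_ne_zero 9 h2)

theorem s_ne (K : Type) [Field K] (h2 : (2 : K) ≠ 0) : sv (Xvar K (Fin 8)) ≠ 0 := by
  have := zlin_ne K h2 (fun _ => 1) one_ne_zero
  simpa [sv] using this

set_option linter.unusedSectionVars false

theorem all7 (P : ZMod 7 → Prop) (h0 : P 0) (h1 : P 1) (h2 : P 2) (h3 : P 3) (h4 : P 4) (h5 : P 5)
    (h6 : P 6) (k : ZMod 7) : P k := by
  have : ∀ k : ZMod 7, k = 0 ∨ k = 1 ∨ k = 2 ∨ k = 3 ∨ k = 4 ∨ k = 5 ∨ k = 6 := by decide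
  rcases this k with rfl | rfl | rfl | rfl | rfl | rfl | rfl <;> assumption

theorem ofNat_ne {K M : Type} [Field K] [Field M] (f : K →+* M) (n : ℕ) (h : (n : K) ≠ 0) : (n : M) ≠ 0 := by
  rw [← map_natCast f n]
  exact (map_ne_zero f).mpr h

def conv {M : Type} [CommRing M] (u v : ZMod 7 → M) (k : ZMod 7) : M := ∑ i, u i * v (k - i)
def dil {M : Type} (e : ZMod 7) (u : ZMod 7 → M) (k : ZMod 7) : M := u (e * k)
def sh {M : Type} (a : ZMod 7) (u : ZMod 7 → M) (k : ZMod 7) : M := u (k + a)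
def tc {M : Type} [CommRing M] (u : ZMod 7 → M) : ZMod 7 → M :=
  conv (dil 1 u) (conv (dil 1 u) (conv (dil 5 u) (conv (dil 5 u) (conv (dil 4 u) (conv (dil 6 u) (dil 3 u))))))
def cc {M : Type} [CommRing M] (u : ZMod 7 → M) : ZMod 7 → M :=
  conv (dil 1 u) (conv (dil 4 u) (conv (dil 2 u) (conv (dil 5 u) (conv (dil 6 u) (dil 3 u)))))

section
variable {M M' : Type} [CommRing M] [CommRing M'] (f : M →+* M') (u v w : ZMod 7 → M)

theorem conv_map : conv (fun i => f (u i)) (fun i => f (v i)) = fun i => f (conv u v i) := by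
  funext k; simp [conv]
theorem dil_map (e : ZMod 7) : dil e (fun i => f (u i)) = fun i => f (dil e u i) := rfl
theorem tc_map : tc (fun i => f (u i)) = fun i => f (tc u i) := by
  simp only [tc, dil_map, conv_map]
theorem cc_map : cc (fun i => f (u i)) = fun i => f (cc u i) := by
  simp only [cc, dil_map, conv_map]

theorem conv_comm : conv u v = conv v u := by
  funext k
  rw [conv, conv, ← Equiv.sum_comp (Equiv.subLeft k)]
  exact Finset.sum_congr rfl fun i _ => by simp [mul_comm]

theorem conv_assoc : conv (conv u v) w = conv u (conv v w) := by
  funext k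
  simp only [conv, Finset.sum_mul, Finset.mul_sum]
  rw [Finset.sum_comm]
  refine Finset.sum_congr rfl fun i _ => ?_
  rw [← Equiv.sum_comp (Equiv.addRight i)]
  refine Finset.sum_congr rfl fun j _ => ?_
  have e1 : j + i - i = j := by ring
  have e2 : k - (j + i) = k - i - j := by ring
  simp only [Equiv.coe_addRight, e1, e2]
  ring

instance : Std.Commutative (conv (M := M)) := ⟨conv_comm⟩
instance : Std.Associative (conv (M := M)) := ⟨conv_assoc⟩

theorem conv_sh (a b : ZMod 7) : conv (sh a u) (sh b v) = sh (a + b) (conv u v) := by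
  funext k
  simp only [conv, sh]
  rw [← Equiv.sum_comp (Equiv.addRight a) (fun i => u i * v (k + (a + b) - i))]
  refine Finset.sum_congr rfl fun i _ => ?_
  simp only [Equiv.coe_addRight]
  congr 2
  ring

theorem dil_sh (e d a : ZMod 7) (h : e * d = a) : dil e (sh a u) = sh d (dil e u) := by
  funext k
  simp only [dil, sh, mul_add, h]

theorem sh_zero : sh 0 u = u := by funext k; simp [sh]

theorem tc_sh : tc (sh 1 u) = tc u := by
  unfold tc
  rw [dil_sh u 1 1 1 (by decide), dil_sh u 5 3 1 (by decide), dil_sh u 4 2 1 (by decide),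
    dil_sh u 6 6 1 (by decide), dil_sh u 3 5 1 (by decide)]
  simp only [conv_sh]
  exact sh_zero _

theorem cc_sh : cc (sh 1 u) = cc u := by
  unfold cc
  rw [dil_sh u 1 1 1 (by decide), dil_sh u 5 3 1 (by decide), dil_sh u 4 2 1 (by decide),
    dil_sh u 2 4 1 (by decide), dil_sh u 6 6 1 (by decide), dil_sh u 3 5 1 (by decide)]
  simp only [conv_sh]
  exact sh_zero _

theorem dil_dil (a b : ZMod 7) : dil a (dil b u) = dil (b * a) u := by
  funext k
  simp only [dil, mul_assoc]

theorem conv_dil2 : conv (dil 2 u) (dil 2 v) = dil 2 (conv u v) := by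
  funext k
  simp only [conv, dil]
  rw [← Equiv.sum_comp dbl (fun i => u i * v (2 * k - i))]
  refine Finset.sum_congr rfl fun i _ => ?_
  have : 2 * (k - i) = 2 * k - dbl i := by simp only [dbl, Equiv.coe_fn_mk]; ring
  rw [this]; rfl

theorem dil_comm (a b : ZMod 7) : dil a (dil b u) = dil b (dil a u) := by
  rw [dil_dil, dil_dil, mul_comm]

theorem tc_dil : tc (dil 2 u) = dil 2 (tc u) := by
  unfold tc
  rw [dil_comm u 1, dil_comm u 3, dil_comm u 4, dil_comm u 5, dil_comm u 6]
  simp only [conv_dil2]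

theorem cc_dil : cc (dil 2 u) = cc u := by
  unfold cc
  simp only [dil_dil]
  have h1 : (2 * 1 : ZMod 7) = 2 := by decide
  have h2 : (2 * 4 : ZMod 7) = 1 := by decide
  have h3 : (2 * 2 : ZMod 7) = 4 := by decide
  have h4 : (2 * 5 : ZMod 7) = 3 := by decide
  have h5 : (2 * 6 : ZMod 7) = 5 := by decide
  have h6 : (2 * 3 : ZMod 7) = 6 := by decide
  rw [h1, h2, h3, h4, h5, h6]
  ac_rfl
end

def rv {M : Type} [Field M] (x : Fin 8 → M) (k : ZMod 7) : M :=
  (tc (zv x) k - tc (zv x) 0) / ((cc (zv x) 0 - cc (zv x) 1) * sv x)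

def genD (M : Type) [Field M] (x : Fin 8 → M) : Fin 8 → M :=
  ![rv x 1, rv x 2, rv x 4, rv x 3, rv x 6, rv x 5, tv x, wv x / sv x ^ 2]

theorem rv_map {M M' : Type} [Field M] [Field M'] (f : M →+* M') (x : Fin 8 → M) (k : ZMod 7) :
    rv (fun a => f (x a)) k = f (rv x k) := by
  have hz : zv (fun a => f (x a)) = fun i => f (zv x i) := funext fun i => zv_map f x i
  simp only [rv, hz, tc_map, cc_map, sv_map, map_div₀, map_mul, map_sub]

theorem genD_map (M M' : Type) [Field M] [Field M'] (f : M →+* M') (x : Fin 8 → M) :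
    genD M' (fun a => f (x a)) = fun i => f (genD M x i) := by
  funext i
  simp only [genD, rv_map, tv_map, wv_map, sv_map]
  fin_cases i <;> simp

theorem genD_inv (M : Type) [Field M] (g : Equiv.Perm (Fin 8))
    (hg : g ∈ ({gS1, gS2, gK, gT} : Set (Equiv.Perm (Fin 8)))) (x : Fin 8 → M) :
    genD M (fun a => x (g a)) = genD M x := by
  have h : (g ∈ ({gS1, gS2, gK} : Set (Equiv.Perm (Fin 8)))) ∨ g = gT := by
    rcases hg with rfl | rfl | rfl | rfl
    · left; simp
    · left; simp
    · left; simp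
    · right; rfl
  rcases h with h | rfl
  · have hz : zv (fun a => x (g a)) = zv x := funext fun i => zv_N x g h i
    have hr : ∀ k, rv (fun a => x (g a)) k = rv x k := fun k => by
      simp only [rv, hz, sv_N x g h]
    simp only [genD, hr, tv_perm, wv_N x g h, sv_N x g h]
  · have hz : zv (fun a => x (gT a)) = sh 1 (zv x) := funext fun i => zv_T x i
    have hr : ∀ k, rv (fun a => x (gT a)) k = rv x k := fun k => by
      simp only [rv, hz, tc_sh, cc_sh, sv_T]
    simp only [genD, hr, tv_perm, wv_T, sv_T]

theorem genD_P (M : Type) [Field M] (x : Fin 8 → M) (i : Fin 8) :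
    genD M (fun a => x (gP a)) i = genD M x (![1, 2, 0, 4, 5, 3, 6, 7] i) := by
  have hz : zv (fun a => x (gP a)) = dil 2 (zv x) := funext fun i => zv_P x i
  have hr : ∀ k, rv (fun a => x (gP a)) k = rv x (2 * k) := fun k => by
    simp only [rv, hz, tc_dil, cc_dil, sv_P]
    simp only [dil, mul_zero]
  have h2 : (2 * 2 : ZMod 7) = 4 := by decide
  have h3 : (2 * 4 : ZMod 7) = 1 := by decide
  have h4 : (2 * 5 : ZMod 7) = 3 := by decide
  have h5 : (2 * 6 : ZMod 7) = 5 := by decide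
  have h6 : (2 * 3 : ZMod 7) = 6 := by decide
  simp only [genD, hr, tv_perm, wv_P, sv_P, mul_one, h2, h3, h4, h5, h6]
  fin_cases i <;> simp only [Fin.zero_eta, Fin.mk_one, Fin.reduceFinMk, Matrix.cons_val]

section
variable {M : Type} [Field M] (ψ : AddChar (ZMod 7) M) (u v : ZMod 7 → M)

def fou (j : ZMod 7) : M := ∑ k, ψ (k * j) * u k

theorem fou_conv (j : ZMod 7) : fou ψ (conv u v) j = fou ψ u j * fou ψ v j := by
  simp only [fou, conv, Finset.mul_sum, Finset.sum_mul]
  rw [Finset.sum_comm]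
  conv_rhs => rw [Finset.sum_comm]
  refine Finset.sum_congr rfl fun i _ => ?_
  rw [← Equiv.sum_comp (Equiv.addRight i)]
  refine Finset.sum_congr rfl fun k _ => ?_
  have e1 : k + i - i = k := by ring
  simp only [Equiv.coe_addRight, e1, add_mul, AddChar.map_add_eq_mul]
  ring

theorem fou_dil (e d : ZMod 7) (h : e * d = 1) (j : ZMod 7) : fou ψ (dil e u) j = fou ψ u (d * j) := by
  have h' : d * e = 1 := by rw [mul_comm]; exact h
  let q : ZMod 7 ≃ ZMod 7 := ⟨fun i => e * i, fun i => d * i,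
    fun i => by simp only [← mul_assoc, h', one_mul], fun i => by simp only [← mul_assoc, h, one_mul]⟩
  simp only [fou, dil]
  rw [← Equiv.sum_comp q (fun k => ψ (k * (d * j)) * u k)]
  refine Finset.sum_congr rfl fun k _ => ?_
  have : q k * (d * j) = k * j := by
    change e * k * (d * j) = k * j
    linear_combination (k * j) * h
  rw [this]; rfl

theorem fou_tc (j : ZMod 7) : fou ψ (tc u) j = fou ψ u j ^ 2 * fou ψ u (3 * j) ^ 2 * fou ψ u (2 * j) *
    fou ψ u (6 * j) * fou ψ u (5 * j) := by
  simp only [tc, fou_conv, fou_dil ψ u 1 1 (by decide), fou_dil ψ u 5 3 (by decide),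
    fou_dil ψ u 4 2 (by decide), fou_dil ψ u 6 6 (by decide), fou_dil ψ u 3 5 (by decide), one_mul]
  ring

theorem fou_cc (j : ZMod 7) : fou ψ (cc u) j = fou ψ u j * fou ψ u (2 * j) * fou ψ u (3 * j) *
    fou ψ u (4 * j) * fou ψ u (5 * j) * fou ψ u (6 * j) := by
  simp only [cc, fou_conv, fou_dil ψ u 1 1 (by decide), fou_dil ψ u 5 3 (by decide),
    fou_dil ψ u 4 2 (by decide), fou_dil ψ u 2 4 (by decide), fou_dil ψ u 6 6 (by decide),
    fou_dil ψ u 3 5 (by decide), one_mul]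
  ring

theorem fou_inv (hψ : ψ.IsPrimitive) (k : ZMod 7) : 7 * u k = ∑ j, ψ (-(k * j)) * fou ψ u j := by
  simp only [fou, Finset.mul_sum]
  rw [Finset.sum_comm]
  have : ∀ i, ∑ j, ψ (-(k * j)) * (ψ (i * j) * u i) = if i = k then 7 * u i else 0 := by
    intro i
    have h := AddChar.sum_mulShift (i - k) hψ
    have e : ∑ j, ψ (-(k * j)) * (ψ (i * j) * u i) = (∑ j, ψ (j * (i - k))) * u i := by
      rw [Finset.sum_mul]
      refine Finset.sum_congr rfl fun j _ => ?_
      have : j * (i - k) = -(k * j) + i * j := by ring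
      rw [this, AddChar.map_add_eq_mul]; ring
    rw [e, h]
    simp only [sub_eq_zero]
    split_ifs <;> simp
  simp [this]

/-- The product of the nontrivial Fourier coefficients. -/
def nn : M := fou ψ u 1 * fou ψ u 2 * fou ψ u 3 * fou ψ u 4 * fou ψ u 5 * fou ψ u 6

theorem fou_cc_ne (j : ZMod 7) (hj : j ≠ 0) : fou ψ (cc u) j = nn ψ u := by
  rw [fou_cc, nn]
  have h : ∀ j : ZMod 7, j ≠ 0 → j = 1 ∨ j = 2 ∨ j = 3 ∨ j = 4 ∨ j = 5 ∨ j = 6 := by decide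
  rcases h j hj with rfl | rfl | rfl | rfl | rfl | rfl <;> reduce_mod_char <;> ring

theorem cc_sub (hψ : ψ.IsPrimitive) (h7 : (7 : M) ≠ 0) : cc u 0 - cc u 1 = nn ψ u := by
  have h0 := fou_inv ψ (cc u) hψ 0
  have h1 := fou_inv ψ (cc u) hψ 1
  apply mul_left_cancel₀ h7
  have hs := AddChar.sum_mulShift (-1) hψ
  rw [if_neg (by decide), Nat.cast_zero] at hs
  have : ∑ j, ψ (-((0 : ZMod 7) * j)) * fou ψ (cc u) j - ∑ j, ψ (-(1 * j)) * fou ψ (cc u) j =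
      ∑ j, (1 - ψ (j * (-1))) * nn ψ u := by
    rw [← Finset.sum_sub_distrib]
    refine Finset.sum_congr rfl fun j _ => ?_
    by_cases hj : j = 0
    · subst hj; simp
    · rw [fou_cc_ne ψ u j hj]
      have : -(1 * j) = j * (-1) := by ring
      rw [this]; simp; ring
  rw [mul_sub, h0, h1, this, ← Finset.sum_mul, Finset.sum_sub_distrib, hs]
  simp
end

theorem mu_rel {M : Type} [Field M] (m0 m1 m2 m3 m4 m5 : M) (h0 : m0 ≠ 0) (h1 : m1 ≠ 0) (h2 : m2 ≠ 0)
    (h3 : m3 ≠ 0) (h4 : m4 ≠ 0) (h5 : m5 ≠ 0) :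
    m1 = m0 ^ 3 * (m2 * m3 / m0) * (m4 * m5 / m2) /
      ((m0 * m1 / m4) * (m3 * m4 / m1) ^ 2 * (m5 * m0 / m3)) := by
  field_simp

theorem mu_pow {M : Type} [Field M] (m0 m1 m2 m3 m4 m5 : M) (h0 : m0 ≠ 0) (h1 : m1 ≠ 0) (h2 : m2 ≠ 0)
    (h3 : m3 ≠ 0) (h4 : m4 ≠ 0) (h5 : m5 ≠ 0) :
    m0 ^ 7 = (m0 * m1 / m4) ^ 3 * (m1 * m2 / m5) * (m3 * m4 / m1) ^ 4 * (m5 * m0 / m3) ^ 2 /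
      ((m2 * m3 / m0) ^ 2 * (m4 * m5 / m2)) := by
  field_simp

theorem rankD {K M : Type} [Field K] [Field M] [Algebra K M] (x : Fin 8 → M)
    (hx : IntermediateField.adjoin K (Set.range x) = ⊤) (h2 : (2 : M) ≠ 0) (h7 : (7 : M) ≠ 0)
    (hy : ∀ i, yv x i ≠ 0) (hs : sv x ≠ 0) (ψ : AddChar (ZMod 7) M) (hψ : ψ.IsPrimitive)
    (hψK : ∀ (F : IntermediateField K M) k, ψ k ∈ F) (hη : ∀ j, fou ψ (zv x) j ≠ 0) :
    Module.rank ↥(IntermediateField.adjoin K (Set.range (genD M x))) M ≤ ((56 : ℕ) : Cardinal) := by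
  set E := IntermediateField.adjoin K (Set.range (genD M x)) with hE
  have hm : ∀ i, genD M x i ∈ E := fun i => IntermediateField.subset_adjoin K _ ⟨i, rfl⟩
  have r1 : rv x 1 ∈ E := hm 0
  have r2 : rv x 2 ∈ E := hm 1
  have r4 : rv x 4 ∈ E := hm 2
  have r3 : rv x 3 ∈ E := hm 3
  have r6 : rv x 6 ∈ E := hm 4
  have r5 : rv x 5 ∈ E := hm 5
  have r0 : rv x 0 ∈ E := by simp [rv, E.zero_mem]
  have hrE : ∀ k, rv x k ∈ E := all7 _ r0 r1 r2 r3 r4 r5 r6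
  have hf0 : fou ψ (zv x) 0 = sv x := by simp [fou, sv]
  have hn : nn ψ (zv x) ≠ 0 := by
    unfold nn
    simp only [ne_eq, mul_eq_zero, hη, or_self, not_false_eq_true]
  set ν : ZMod 7 → M := fun j => fou ψ (zv x) j / sv x with hν
  have hν0 : ∀ j, ν j ≠ 0 := fun j => div_ne_zero (hη j) hs
  have hT : ∀ j, j ≠ 0 → ν j * ν (3 * j) / ν (4 * j) ∈ E := by
    intro j hj
    have e : ν j * ν (3 * j) / ν (4 * j) = ∑ k, ψ (k * j) * rv x k := by
      have h1 : ∑ k, ψ (k * j) * rv x k = fou ψ (tc (zv x)) j / (nn ψ (zv x) * sv x) := by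
        have hsum := AddChar.sum_mulShift j hψ
        rw [if_neg hj, Nat.cast_zero] at hsum
        simp only [rv, cc_sub ψ (zv x) hψ h7]
        simp only [mul_div_assoc', ← Finset.sum_div, mul_sub, Finset.sum_sub_distrib, ← Finset.sum_mul, hsum]
        simp [fou]
      rw [h1, fou_tc, ← fou_cc_ne ψ (zv x) j hj, fou_cc]
      simp only [hν]
      have := hη j
      have := hη (2 * j)
      have := hη (3 * j)
      have := hη (4 * j)
      have := hη (5 * j)
      have := hη (6 * j)
      field_simp
    rw [e]
    exact sum_mem fun k _ => E.mul_mem (hψK E _) (hrE k)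
  have T0 : ν 1 * ν 3 / ν 4 ∈ E := hT 1 (by decide)
  have T1 : ν 3 * ν 2 / ν 5 ∈ E := hT 3 (by decide)
  have T2 : ν 2 * ν 6 / ν 1 ∈ E := hT 2 (by decide)
  have T3 : ν 6 * ν 4 / ν 3 ∈ E := hT 6 (by decide)
  have T4 : ν 4 * ν 5 / ν 2 ∈ E := hT 4 (by decide)
  have T5 : ν 5 * ν 1 / ν 6 ∈ E := hT 5 (by decide)
  have hpow : ν 1 ^ 7 ∈ E := by
    rw [mu_pow (ν 1) (ν 3) (ν 2) (ν 6) (ν 4) (ν 5) (hν0 _) (hν0 _) (hν0 _) (hν0 _) (hν0 _) (hν0 _)]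
    exact E.div_mem (E.mul_mem (E.mul_mem (E.mul_mem (pow_mem T0 3) T1) (pow_mem T3 4)) (pow_mem T5 2))
      (E.mul_mem (pow_mem T2 2) T4)
  refine degStep E (ν 1) 7 ![ν 1 ^ 7, 0, 0, 0, 0, 0, 0] ?_ ?_ 8 ?_
  · intro i
    fin_cases i
    · exact hpow
    all_goals exact E.zero_mem
  · simp [Fin.sum_univ_seven]
  set F := E ⊔ IntermediateField.adjoin K {ν 1} with hF
  have le : E ≤ F := le_sup_left
  have n1 : ν 1 ∈ F := le_sup_right (a := E) (IntermediateField.subset_adjoin K _ (by simp))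
  have next : ∀ m0 m1 m2 m3 m4 m5 : M, m0 ≠ 0 → m1 ≠ 0 → m2 ≠ 0 → m3 ≠ 0 → m4 ≠ 0 → m5 ≠ 0 →
      m0 ∈ F → m0 * m1 / m4 ∈ E → m2 * m3 / m0 ∈ E → m3 * m4 / m1 ∈ E → m4 * m5 / m2 ∈ E → m5 * m0 / m3 ∈ E →
      m1 ∈ F := by
    intro m0 m1 m2 m3 m4 m5 h0 h1 h2 h3 h4 h5 hm t0 t2 t3 t4 t5
    rw [mu_rel m0 m1 m2 m3 m4 m5 h0 h1 h2 h3 h4 h5]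
    exact F.div_mem (F.mul_mem (F.mul_mem (pow_mem hm 3) (le t2)) (le t4))
      (F.mul_mem (F.mul_mem (le t0) (pow_mem (le t3) 2)) (le t5))
  have n3 : ν 3 ∈ F := next (ν 1) (ν 3) (ν 2) (ν 6) (ν 4) (ν 5) (hν0 _) (hν0 _) (hν0 _) (hν0 _) (hν0 _) (hν0 _)
    n1 T0 T2 T3 T4 T5
  have n2 : ν 2 ∈ F := next (ν 3) (ν 2) (ν 6) (ν 4) (ν 5) (ν 1) (hν0 _) (hν0 _) (hν0 _) (hν0 _) (hν0 _) (hν0 _)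
    n3 T1 T3 T4 T5 T0
  have n6 : ν 6 ∈ F := next (ν 2) (ν 6) (ν 4) (ν 5) (ν 1) (ν 3) (hν0 _) (hν0 _) (hν0 _) (hν0 _) (hν0 _) (hν0 _)
    n2 T2 T4 T5 T0 T1
  have n4 : ν 4 ∈ F := next (ν 6) (ν 4) (ν 5) (ν 1) (ν 3) (ν 2) (hν0 _) (hν0 _) (hν0 _) (hν0 _) (hν0 _) (hν0 _)
    n6 T3 T5 T0 T1 T2
  have n5 : ν 5 ∈ F := next (ν 4) (ν 5) (ν 1) (ν 3) (ν 2) (ν 6) (hν0 _) (hν0 _) (hν0 _) (hν0 _) (hν0 _) (hν0 _)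
    n4 T4 T0 T1 T2 T3
  have n0 : ν 0 ∈ F := by
    have : ν 0 = 1 := by simp only [hν, hf0]; exact div_self hs
    rw [this]; exact F.one_mem
  have hνF : ∀ j, ν j ∈ F := all7 _ n0 n1 n2 n3 n4 n5 n6
  refine chain8 x hx h2 hy hs F ?_ (le (hm 7)) (le (hm 6))
  intro i
  have : zv x i / sv x = (∑ j, ψ (-(i * j)) * ν j) / (7 : ℕ) := by
    have h := fou_inv ψ (zv x) hψ i
    have e : ∑ j, ψ (-(i * j)) * ν j = (7 * zv x i) / sv x := by
      rw [h, Finset.sum_div]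
      exact Finset.sum_congr rfl fun j _ => by simp only [hν]; ring
    rw [e]
    push_cast
    field_simp
  rw [this]
  exact F.div_mem (sum_mem fun j _ => F.mul_mem (hψK F _) (hνF j)) (natCast_mem F 7)

theorem caseD (K : Type) [Field K] (h2 : (2 : K) ≠ 0) (h7 : (7 : K) ≠ 0) :
    IsRatExt K ↥(fixedSub K (Fin 8) (Subgroup.closure {gS1, gS2, gK, gT, gP})) := by
  let K' := AlgebraicClosure K
  have h2' : (2 : K') ≠ 0 := ofNat_ne (algebraMap K K') 2 h2
  have h7' : (7 : K') ≠ 0 := ofNat_ne (algebraMap K K') 7 h7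
  have h2M : (2 : RFF K' (Fin 8)) ≠ 0 := ofNat_ne (algebraMap K' _) 2 h2'
  have h7M : (7 : RFF K' (Fin 8)) ≠ 0 := ofNat_ne (algebraMap K' _) 7 h7'
  refine stageI K K' genD genD_map (fun g hg x => genD_inv _ g hg x) (fun x i => genD_P _ x i) ?_
  have : NeZero ((7 : ℕ) : K') := ⟨by exact_mod_cast h7'⟩
  obtain ⟨ζ, hζ⟩ := HasEnoughRootsOfUnity.exists_primitiveRoot K' 7
  have hζM := hζ.map_of_injective (algebraMap K' (RFF K' (Fin 8))).injective
  set ψ := AddChar.zmodChar 7 hζM.pow_eq_one with hψd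
  have hψ : ψ.IsPrimitive := AddChar.zmodChar_primitive_of_primitive_root 7 hζM
  have hval : ∀ k, ψ k = algebraMap K' (RFF K' (Fin 8)) (ζ ^ k.val) := by
    intro k
    rw [hψd, AddChar.zmodChar_apply, map_pow]
  refine rankD _ (adjoin_Xvar K') h2M h7M (y_ne K' h2') (s_ne K' h2') ψ hψ ?_ ?_
  · intro F k
    rw [hval]
    exact F.algebraMap_mem _
  · intro j
    simp only [fou, hval]
    exact zlin_ne K' h2' _ (by simp)

set_option linter.unusedSectionVars false

def Zn {M : Type} [Field M] (x : Fin 8 → M) (i : ZMod 7) : M := zv x i / sv x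
def om {M : Type} [Field M] (x : Fin 8 → M) : M := ∑ i : ZMod 7, (i.val : M) * Zn x i
def th {M : Type} [Field M] (x : Fin 8 → M) : M := om x ^ 7 - om x
def qk {M : Type} [Field M] (x : Fin 8 → M) (k : ℕ) : M := ∑ i : ZMod 7, ((i.val : M) - om x) ^ k * Zn x i

def genE (M : Type) [Field M] (x : Fin 8 → M) : Fin 8 → M :=
  ![th x + qk x 2 + qk x 3, 4 * th x + 2 * qk x 2 + qk x 3, 2 * th x + 4 * qk x 2 + qk x 3,
    qk x 4 + qk x 5 + qk x 6, 4 * qk x 4 + 2 * qk x 5 + qk x 6, 2 * qk x 4 + 4 * qk x 5 + qk x 6,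
    tv x, wv x / sv x ^ 2]

section
variable {M M' : Type} [Field M] [Field M'] (f : M →+* M') (x : Fin 8 → M)

theorem Zn_map (i : ZMod 7) : Zn (fun a => f (x a)) i = f (Zn x i) := by
  simp only [Zn, zv_map, sv_map, map_div₀]
theorem om_map : om (fun a => f (x a)) = f (om x) := by
  simp only [om, Zn_map, map_sum, map_mul, map_natCast]
theorem th_map : th (fun a => f (x a)) = f (th x) := by
  simp only [th, om_map, map_sub, map_pow]
theorem qk_map (k : ℕ) : qk (fun a => f (x a)) k = f (qk x k) := by
  simp only [qk, om_map, Zn_map, map_sum, map_mul, map_natCast, map_pow, map_sub]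

theorem genE_map (M M' : Type) [Field M] [Field M'] (f : M →+* M') (x : Fin 8 → M) :
    genE M' (fun a => f (x a)) = fun i => f (genE M x i) := by
  funext i
  have e2 : f 2 = 2 := map_ofNat f 2
  have e4 : f 4 = 4 := map_ofNat f 4
  simp only [genE, th_map, qk_map, tv_map, wv_map, sv_map]
  fin_cases i <;> simp [e2, e4]

theorem genE_N (g : Equiv.Perm (Fin 8)) (h : g ∈ ({gS1, gS2, gK} : Set (Equiv.Perm (Fin 8)))) :
    genE M (fun a => x (g a)) = genE M x := by
  have hZ : ∀ i, Zn (fun a => x (g a)) i = Zn x i := fun i => by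
    simp only [Zn, zv_N x g h, sv_N x g h]
  have ho : om (fun a => x (g a)) = om x := by simp only [om, hZ]
  simp only [genE, th, qk, ho, hZ, tv_perm, wv_N x g h, sv_N x g h]

variable [CharP M 7]

theorem vadd (i j : ZMod 7) : (((i + j).val : ℕ) : M) = i.val + j.val := by
  simp only [ZMod.natCast_val]
  exact map_add (ZMod.castHom (dvd_refl 7) M) i j
theorem vmul (i j : ZMod 7) : (((i * j).val : ℕ) : M) = i.val * j.val := by
  simp only [ZMod.natCast_val]
  exact map_mul (ZMod.castHom (dvd_refl 7) M) i j

theorem seven_eq : (7 : M) = 0 := by exact_mod_cast CharP.cast_eq_zero M 7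

theorem sum_Zn (hs : sv x ≠ 0) : ∑ i, Zn x i = 1 := by
  simp only [Zn, ← Finset.sum_div]
  exact div_self hs

theorem om_T (hs : sv x ≠ 0) : om (fun a => x (gT a)) = om x - 1 := by
  have h1 := sum_Zn x hs
  have hZ : ∀ i, Zn (fun a => x (gT a)) i = Zn x (i + 1) := fun i => by
    simp only [Zn, zv_T, sv_T]
  have e := Equiv.sum_comp (Equiv.addRight (1 : ZMod 7)) (fun i => ((i.val : M) - 1) * Zn x i)
  simp only [om, hZ]
  calc ∑ i : ZMod 7, (i.val : M) * Zn x (i + 1)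
      = ∑ i : ZMod 7, (((i + 1).val : M) - 1) * Zn x (i + 1) := by
        refine Finset.sum_congr rfl fun i _ => ?_
        rw [vadd]; simp [ZMod.val_one]
    _ = ∑ i : ZMod 7, ((i.val : M) - 1) * Zn x i := e
    _ = _ := by
        simp only [sub_mul, Finset.sum_sub_distrib, one_mul, h1]

theorem qk_T (hs : sv x ≠ 0) (k : ℕ) : qk (fun a => x (gT a)) k = qk x k := by
  have hZ : ∀ i, Zn (fun a => x (gT a)) i = Zn x (i + 1) := fun i => by
    simp only [Zn, zv_T, sv_T]
  simp only [qk, om_T x hs, hZ]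
  rw [← Equiv.sum_comp (Equiv.addRight (1 : ZMod 7)) (fun i => ((i.val : M) - om x) ^ k * Zn x i)]
  refine Finset.sum_congr rfl fun i _ => ?_
  simp only [Equiv.coe_addRight]
  rw [vadd]
  have : (1 : ZMod 7).val = 1 := rfl
  rw [this]
  push_cast
  ring

theorem th_T (hs : sv x ≠ 0) : th (fun a => x (gT a)) = th x := by
  have h7 := seven_eq (M := M)
  simp only [th, om_T x hs]
  linear_combination (-om x ^ 6 + 3 * om x ^ 5 - 5 * om x ^ 4 + 5 * om x ^ 3 - 3 * om x ^ 2 + om x) * h7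

theorem Zn_P (i : ZMod 7) : Zn (fun a => x (gP a)) i = Zn x (2 * i) := by
  simp only [Zn, zv_P, sv_P]

theorem vhalf (i : ZMod 7) : (i.val : M) = 4 * (((2 * i).val : ℕ) : M) := by
  have h7 := seven_eq (M := M)
  rw [vmul]
  have : (2 : ZMod 7).val = 2 := rfl
  rw [this]
  push_cast
  linear_combination (-(i.val : M)) * h7

theorem om_P : om (fun a => x (gP a)) = 4 * om x := by
  simp only [om, Zn_P]
  rw [Finset.mul_sum, ← Equiv.sum_comp dbl (fun i => 4 * ((i.val : M) * Zn x i))]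
  refine Finset.sum_congr rfl fun i _ => ?_
  rw [vhalf i, mul_assoc]; rfl

theorem qk_P (k : ℕ) : qk (fun a => x (gP a)) k = 4 ^ k * qk x k := by
  simp only [qk, Zn_P, om_P]
  rw [Finset.mul_sum, ← Equiv.sum_comp dbl (fun i => 4 ^ k * (((i.val : M) - om x) ^ k * Zn x i))]
  refine Finset.sum_congr rfl fun i _ => ?_
  rw [vhalf i, ← mul_sub, mul_pow, mul_assoc]; rfl

theorem th_P : th (fun a => x (gP a)) = 4 * th x := by
  have h7 := seven_eq (M := M)
  simp only [th, om_P]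
  linear_combination (2340 * om x ^ 7) * h7

theorem genE_inv (g : Equiv.Perm (Fin 8))
    (hg : g ∈ ({gS1, gS2, gK, gT} : Set (Equiv.Perm (Fin 8)))) :
    genE M (fun a => x (g a)) = genE M x := by
  have h : (g ∈ ({gS1, gS2, gK} : Set (Equiv.Perm (Fin 8)))) ∨ g = gT := by
    rcases hg with rfl | rfl | rfl | rfl
    · left; simp
    · left; simp
    · left; simp
    · right; rfl
  rcases h with h | rfl
  · exact genE_N x g h
  · by_cases hs : sv x = 0
    · have hZ : ∀ i, Zn x i = 0 := fun i => by simp [Zn, hs]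
      have hZ' : ∀ i, Zn (fun a => x (gT a)) i = 0 := fun i => by rw [Zn, sv_T, hs, div_zero]
      simp only [genE, th, qk, om, hZ, hZ', tv_perm, wv_T, sv_T, mul_zero, Finset.sum_const_zero]
    · simp only [genE, th_T x hs, qk_T x hs, tv_perm, wv_T, sv_T]

theorem genE_P (i : Fin 8) :
    genE M (fun a => x (gP a)) i = genE M x (![1, 2, 0, 4, 5, 3, 6, 7] i) := by
  have h7 := seven_eq (M := M)
  simp only [genE, th_P, qk_P, tv_perm, wv_P, sv_P]
  fin_cases i <;> simp only [Fin.zero_eta, Fin.mk_one, Fin.reduceFinMk, Matrix.cons_val]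
  · linear_combination (2 * qk x 2 + 9 * qk x 3) * h7
  · linear_combination (2 * th x + 4 * qk x 2 + 9 * qk x 3) * h7
  · linear_combination (th x + 9 * qk x 2 + 9 * qk x 3) * h7
  · linear_combination (36 * qk x 4 + 146 * qk x 5 + 585 * qk x 6) * h7
  · linear_combination (146 * qk x 4 + 292 * qk x 5 + 585 * qk x 6) * h7
  · linear_combination (73 * qk x 4 + 585 * qk x 5 + 585 * qk x 6) * h7

theorem Zn_rec (hs : sv x ≠ 0) (b : ZMod 7) : Zn x b = 1 - ∑ k ∈ Finset.range 7,
    qk x k * (om x - b.val) ^ (6 - k) * (Nat.choose 6 k : M) := by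
  have h1 := sum_Zn x hs
  have hd : ∀ i b : ZMod 7, (i - b) ^ 6 = if i = b then 0 else 1 := by decide
  have hd' : ∀ i : ZMod 7, ((i.val : M) - b.val) ^ 6 = if i = b then 0 else 1 := by
    intro i
    have := congrArg (ZMod.castHom (dvd_refl 7) M) (hd i b)
    simp only [map_pow, map_sub, ZMod.castHom_apply] at this
    simp only [ZMod.natCast_val]
    rw [this]
    split_ifs <;> simp
  have key : ∑ i : ZMod 7, ((i.val : M) - b.val) ^ 6 * Zn x i = ∑ k ∈ Finset.range 7,
      qk x k * (om x - b.val) ^ (6 - k) * (Nat.choose 6 k : M) := by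
    simp only [qk, Finset.sum_mul]
    rw [Finset.sum_comm]
    refine Finset.sum_congr rfl fun i _ => ?_
    have : (i.val : M) - b.val = (i.val - om x) + (om x - b.val) := by ring
    rw [this, add_pow, Finset.sum_mul]
    exact Finset.sum_congr rfl fun k _ => by ring
  rw [← key, ← h1]
  simp only [hd', ite_mul, zero_mul, one_mul]
  rw [← Finset.sum_sub_distrib]
  have : ∀ i, Zn x i - (if i = b then 0 else Zn x i) = if i = b then Zn x i else 0 := by
    intro i; split_ifs <;> simp
  simp [this]

theorem rankE {K : Type} [Field K] [Algebra K M]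
    (hx : IntermediateField.adjoin K (Set.range x) = ⊤) (hy : ∀ i, yv x i ≠ 0) (hs : sv x ≠ 0) :
    Module.rank ↥(IntermediateField.adjoin K (Set.range (genE M x))) M ≤ ((56 : ℕ) : Cardinal) := by
  have h7 := seven_eq (M := M)
  have h2 : (2 : M) ≠ 0 := by
    intro h
    have : (1 : M) = 0 := by linear_combination h7 - 3 * h
    exact one_ne_zero this
  set E := IntermediateField.adjoin K (Set.range (genE M x)) with hE
  have hm : ∀ i, genE M x i ∈ E := fun i => IntermediateField.subset_adjoin K _ ⟨i, rfl⟩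
  have inv3 : ∀ a b c : M, a + b + c ∈ E → 4 * a + 2 * b + c ∈ E → 2 * a + 4 * b + c ∈ E →
      a ∈ E ∧ b ∈ E ∧ c ∈ E := by
    intro a b c h0 h1 h2
    have n : ∀ n : ℕ, (n : M) ∈ E := fun n => natCast_mem E n
    refine ⟨?_, ?_, ?_⟩
    · have e : a = (5 : ℕ) * ((a + b + c) + (2 : ℕ) * (4 * a + 2 * b + c) + (4 : ℕ) * (2 * a + 4 * b + c)) := by
        push_cast
        linear_combination (-12 * a - 15 * b - 5 * c) * h7
      rw [e]
      exact E.mul_mem (n _) (E.add_mem (E.add_mem h0 (E.mul_mem (n _) h1)) (E.mul_mem (n _) h2))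
    · have e : b = (5 : ℕ) * ((a + b + c) + (4 : ℕ) * (4 * a + 2 * b + c) + (2 : ℕ) * (2 * a + 4 * b + c)) := by
        push_cast
        linear_combination (-15 * a - 12 * b - 5 * c) * h7
      rw [e]
      exact E.mul_mem (n _) (E.add_mem (E.add_mem h0 (E.mul_mem (n _) h1)) (E.mul_mem (n _) h2))
    · have e : c = (5 : ℕ) * ((a + b + c) + (4 * a + 2 * b + c) + (2 * a + 4 * b + c)) := by
        push_cast
        linear_combination (-5 * a - 5 * b - 2 * c) * h7
      rw [e]
      exact E.mul_mem (n _) (E.add_mem (E.add_mem h0 h1) h2)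
  obtain ⟨mt, m2, m3⟩ := inv3 _ _ _ (hm 0) (hm 1) (hm 2)
  obtain ⟨m4, m5, m6⟩ := inv3 _ _ _ (hm 3) (hm 4) (hm 5)
  have m0 : qk x 0 ∈ E := by
    have : qk x 0 = 1 := by simp only [qk, pow_zero, one_mul, sum_Zn x hs]
    rw [this]; exact E.one_mem
  have m1 : qk x 1 ∈ E := by
    have : qk x 1 = 0 := by
      simp only [qk, pow_one, sub_mul, Finset.sum_sub_distrib, ← Finset.mul_sum, sum_Zn x hs]
      simp [om]
    rw [this]; exact E.zero_mem
  have mq : ∀ k ∈ Finset.range 7, qk x k ∈ E := by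
    intro k hk
    have hk := Finset.mem_range.mp hk
    interval_cases k <;> assumption
  refine degStep E (om x) 7 ![th x, 1, 0, 0, 0, 0, 0] ?_ ?_ 8 ?_
  · intro i
    fin_cases i
    · exact mt
    · exact E.one_mem
    all_goals exact E.zero_mem
  · simp [Fin.sum_univ_seven, th]
  set F := E ⊔ IntermediateField.adjoin K {om x} with hF
  have le : E ≤ F := le_sup_left
  have n1 : om x ∈ F := le_sup_right (a := E) (IntermediateField.subset_adjoin K _ (by simp))
  refine chain8 x hx h2 hy hs F ?_ (le (hm 7)) (le (hm 6))
  intro b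
  change Zn x b ∈ F
  rw [Zn_rec x hs b]
  exact F.sub_mem F.one_mem (sum_mem fun k hk => F.mul_mem (F.mul_mem (le (mq k hk))
    (pow_mem (F.sub_mem n1 (natCast_mem F _)) _)) (natCast_mem F _))
end

theorem caseE (K : Type) [Field K] (h7 : (7 : K) = 0) :
    IsRatExt K ↥(fixedSub K (Fin 8) (Subgroup.closure {gS1, gS2, gK, gT, gP})) := by
  have h2 : (2 : K) ≠ 0 := by
    intro h
    have : (1 : K) = 0 := by linear_combination h7 - 3 * h
    exact one_ne_zero this
  have : CharP K 7 := (CharP.charP_iff_prime_eq_zero (by norm_num)).mpr (by exact_mod_cast h7)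
  have : CharP (RFF K (Fin 8)) 7 := charP_of_injective_algebraMap (algebraMap K (RFF K (Fin 8))).injective 7
  exact stageI K K genE genE_map (fun g hg x => genE_inv x g hg) (fun x i => genE_P x i)
    (rankE _ (adjoin_Xvar K) (y_ne K h2) (s_ne K h2))

theorem rffMap_Xvar (K K' : Type) [Field K] [Field K'] [Algebra K K'] (a : Fin 8) :
    rffMap K K' (Xvar K (Fin 8) a) = Xvar K' (Fin 8) a := by
  simp [Xvar, rffMap_algebraMap]

theorem stageI' (K K' : Type) [Field K] [Field K'] [Algebra K K']
    (gen : (M : Type) → [Field M] → (Fin 8 → M) → Fin 8 → M)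
    (nat : ∀ (M M' : Type) [Field M] [Field M'] (f : M →+* M') (x : Fin 8 → M),
      gen M' (fun a => f (x a)) = fun i => f (gen M x i))
    (hinv : ∀ g ∈ ({gS1, gS2, gK, gT} : Set (Equiv.Perm (Fin 8))),
      gen _ (fun a => Xvar K' (Fin 8) (g a)) = gen _ (Xvar K' (Fin 8)))
    (hP : ∀ i, gen _ (fun a => Xvar K' (Fin 8) (gP a)) i =
      gen _ (Xvar K' (Fin 8)) (![1, 2, 0, 4, 5, 3, 6, 7] i))
    (hr : Module.rank ↥(IntermediateField.adjoin K' (Set.range (gen _ (Xvar K' (Fin 8)))))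
      (RFF K' (Fin 8)) ≤ ((56 : ℕ) : Cardinal)) :
    IsRatExt K ↥(fixedSub K (Fin 8) (Subgroup.closure {gS1, gS2, gK, gT, gP})) := by
  set g := gen _ (Xvar K (Fin 8)) with hg
  have hgv : ![g 0, g 1, g 2, g 3, g 4, g 5, g 6, g 7] = g := by
    funext i; fin_cases i <;> rfl
  have key : ∀ (s : Equiv.Perm (Fin 8)) i, permHom K (Fin 8) s (g i) =
      gen _ (fun a => Xvar K (Fin 8) (s a)) i := by
    intro s i
    have := congrFun (nat _ _ (permHom K (Fin 8) s : RFF K (Fin 8) →+* RFF K (Fin 8)) (Xvar K (Fin 8))) i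
    rw [hg]
    refine Eq.trans this.symm ?_
    congr 1
    funext a
    exact permHom_X K s a
  have up : ∀ (s : Equiv.Perm (Fin 8)) i, rffMap K K' (gen _ (fun a => Xvar K (Fin 8) (s a)) i) =
      gen _ (fun a => Xvar K' (Fin 8) (s a)) i := by
    intro s i
    have := congrFun (nat _ _ (rffMap K K') (fun a => Xvar K (Fin 8) (s a))) i
    rw [← this]
    simp only [rffMap_Xvar]
  have up1 : ∀ i, rffMap K K' (g i) = gen _ (Xvar K' (Fin 8)) i := up 1
  refine stage2 K (g 0) (g 1) (g 2) (g 3) (g 4) (g 5) (g 6) (g 7) ?_ ?_ ?_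
  · rw [hgv]
    refine rff_descent K K' g 56 ?_
    have : (fun i => rffMap K K' (g i)) = gen _ (Xvar K' (Fin 8)) := funext up1
    rw [this]
    exact hr
  · intro s hs i
    rw [hgv, key]
    apply (rffMap K K').injective
    rw [up, up1, hinv s hs]
  · intro i
    have e : permHom K (Fin 8) gP (![g 0, g 1, g 2, g 3, g 4, g 5, g 6, g 7] i) =
      g (![1, 2, 0, 4, 5, 3, 6, 7] i) := by
      rw [hgv, key]
      apply (rffMap K K').injective
      rw [up, up1, hP]
    rw [e]
    fin_cases i <;> rfl

def co (i : ZMod 3) (a : Fin 8) : ℕ :=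
  (![if parb a.val then 1 else 0, if a.val.testBit 1 then 1 else 0, if a.val.testBit 0 then 1 else 0] : Fin 3 → ℕ) i

def rot {M : Type} (m : ZMod 3 → M) (i : ZMod 3) : M := m (i + 1)
def mul3 {M : Type} [CommRing M] (m n : ZMod 3 → M) (k : ZMod 3) : M :=
  m (k + 2) * n (k + 2) + (m k * n (k + 1) + m (k + 1) * n k) + (m (k + 1) * n (k + 2) + m (k + 2) * n (k + 1))
def N3 {M : Type} [CommRing M] (m : ZMod 3 → M) : M := mul3 m (mul3 (rot m) (rot (rot m))) 0
def inv3 {M : Type} [Field M] (m : ZMod 3 → M) (i : ZMod 3) : M := mul3 (rot m) (rot (rot m)) i / N3 m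

section
variable {M : Type} [Field M] (x : Fin 8 → M)
def Xn (a : Fin 8) : M := x a / tv x
def wc (i : ZMod 3) : M := ∑ a, (co i a : M) * Xn x a
def vc (i : ZMod 3) : M := wc x i ^ 2 - wc x i
def rc : ZMod 3 → M := mul3 (fun i => vc x i ^ 2) (inv3 (vc x))
def Wc (a : Fin 8) : ZMod 3 → M := mul3 (fun i => (co i a : M) - wc x i) (inv3 (vc x))
def Qc (i : ZMod 3) : M := ∑ a, mul3 (Wc x a) (rot (Wc x a)) i * Xn x a
def q7 : M := ∑ a, N3 (Wc x a) * Xn x a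
end

def genF (M : Type) [Field M] (x : Fin 8 → M) : Fin 8 → M :=
  ![rc x 0, rc x 1, rc x 2, Qc x 0, Qc x 1, Qc x 2, q7 x, tv x]

section
variable {M M' : Type} [CommRing M] [CommRing M'] (f : M →+* M') (m n : ZMod 3 → M)
theorem mul3_map : mul3 (fun i => f (m i)) (fun i => f (n i)) = fun i => f (mul3 m n i) := by
  funext i; simp [mul3]
theorem rot_map : rot (fun i => f (m i)) = fun i => f (rot m i) := rfl
theorem N3_map : N3 (fun i => f (m i)) = f (N3 m) := by
  simp only [N3, rot_map, mul3_map]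
end

section
variable {M M' : Type} [Field M] [Field M'] (f : M →+* M') (x : Fin 8 → M)
theorem inv3_map (m : ZMod 3 → M) : inv3 (fun i => f (m i)) = fun i => f (inv3 m i) := by
  funext i; simp only [inv3, rot_map, mul3_map, N3_map, map_div₀]
theorem Xn_map : Xn (fun a => f (x a)) = fun a => f (Xn x a) := by
  funext a; simp only [Xn, tv_map, map_div₀]
theorem wc_map : wc (fun a => f (x a)) = fun i => f (wc x i) := by
  funext i; simp only [wc, Xn_map, map_sum, map_mul, map_natCast]
theorem vc_map : vc (fun a => f (x a)) = fun i => f (vc x i) := by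
  funext i; simp only [vc, wc_map, map_sub, map_pow]
theorem rc_map : rc (fun a => f (x a)) = fun i => f (rc x i) := by
  simp only [rc, vc_map, inv3_map, ← map_pow, mul3_map]
theorem Wc_map (a : Fin 8) : Wc (fun a => f (x a)) a = fun i => f (Wc x a i) := by
  have : (fun i => ((co i a : M') - f (wc x i))) = fun i => f ((co i a : M) - wc x i) := by
    funext i; simp
  simp only [Wc, vc_map, wc_map, inv3_map, this, mul3_map]
theorem Qc_map : Qc (fun a => f (x a)) = fun i => f (Qc x i) := by
  funext i; simp only [Qc, Wc_map, rot_map, mul3_map, Xn_map, map_sum, map_mul]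
theorem q7_map : q7 (fun a => f (x a)) = f (q7 x) := by
  simp only [q7, Wc_map, N3_map, Xn_map, map_sum, map_mul]
end

theorem genF_map (M M' : Type) [Field M] [Field M'] (f : M →+* M') (x : Fin 8 → M) :
    genF M' (fun a => f (x a)) = fun i => f (genF M x i) := by
  funext i
  simp only [genF, rc_map, Qc_map, q7_map, tv_map]
  fin_cases i <;> simp

/-- Evaluation of a triple in a field containing `F_8`. -/
def ev {M : Type} [CommRing M] (e m : ZMod 3 → M) (j : ZMod 3) : M :=
  e j * m 0 + e (j + 1) * m 1 + e (j + 2) * m 2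

/-- A normal basis of `F_8`. -/
structure NB {M : Type} [CommRing M] (e : ZMod 3 → M) : Prop where
  two : (2 : M) = 0
  tr : ∀ j, e j + e (j + 1) + e (j + 2) = 1
  sq : ∀ j, e j ^ 2 = e (j + 1)
  mul : ∀ j, e j * e (j + 1) = e j + e (j + 2)

theorem z3a (j : ZMod 3) : j + 1 + 1 = j + 2 := by revert j; decide
theorem z3b (j : ZMod 3) : j + 1 + 2 = j := by revert j; decide
theorem z3c (j : ZMod 3) : j + 2 + 1 = j := by revert j; decide
theorem z3d (j : ZMod 3) : j + 2 + 2 = j + 1 := by revert j; decide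

section
variable {M : Type} [CommRing M] {e : ZMod 3 → M}

theorem ev_mul (he : NB e) (m n : ZMod 3 → M) (j : ZMod 3) : ev e (mul3 m n) j = ev e m j * ev e n j := by
  have h0 : mul3 m n 0 = m 2 * n 2 + (m 0 * n 1 + m 1 * n 0) + (m 1 * n 2 + m 2 * n 1) := rfl
  have h1 : mul3 m n 1 = m 0 * n 0 + (m 1 * n 2 + m 2 * n 1) + (m 2 * n 0 + m 0 * n 2) := rfl
  have h2 : mul3 m n 2 = m 1 * n 1 + (m 2 * n 0 + m 0 * n 2) + (m 0 * n 1 + m 1 * n 0) := rfl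
  have s0 := he.sq j
  have s1 := he.sq (j + 1)
  have s2 := he.sq (j + 2)
  have p0 := he.mul j
  have p1 := he.mul (j + 1)
  have p2 := he.mul (j + 2)
  simp only [z3a, z3b, z3c, z3d] at s1 s2 p1 p2
  simp only [ev, h0, h1, h2]
  linear_combination (-m 0 * n 0) * s0 - m 1 * n 1 * s1 - m 2 * n 2 * s2 - (m 0 * n 1 + m 1 * n 0) * p0
    - (m 1 * n 2 + m 2 * n 1) * p1 - (m 2 * n 0 + m 0 * n 2) * p2

theorem ev_rec (he : NB e) (m : ZMod 3 → M) (j : ZMod 3) : m j = e j * ev e m 0 + e (j + 1) * ev e m 1 + e (j + 2) * ev e m 2 := by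
  have key : ∀ a b c : M, ∀ i j k : ZMod 3, True := fun _ _ _ _ _ _ => trivial
  have t := he.tr 0
  have s0 := he.sq 0
  have s1 := he.sq 1
  have s2 := he.sq 2
  have p0 := he.mul 0
  have p1 := he.mul 1
  have p2 := he.mul 2
  have two := he.two
  have c1 : (0 : ZMod 3) + 1 = 1 := rfl
  have c2 : (0 : ZMod 3) + 2 = 2 := rfl
  have c3 : (1 : ZMod 3) + 1 = 2 := rfl
  have c4 : (1 : ZMod 3) + 2 = 0 := rfl
  have c5 : (2 : ZMod 3) + 1 = 0 := rfl
  have c6 : (2 : ZMod 3) + 2 = 1 := rfl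
  have hj : ∀ j : ZMod 3, j = 0 ∨ j = 1 ∨ j = 2 := by decide
  simp only [c1, c2, c3, c4, c5, c6] at t s0 s1 s2 p0 p1 p2
  have o : e 0 * e 1 + e 1 * e 2 + e 2 * e 0 = 0 := by
    linear_combination p0 + p1 + p2 + (e 0 + e 1 + e 2) * two
  have d : e 0 ^ 2 + e 1 ^ 2 + e 2 ^ 2 = 1 := by
    linear_combination s0 + s1 + s2 + t
  rcases hj j with rfl | rfl | rfl <;> simp only [ev, c1, c2, c3, c4, c5, c6]
  · linear_combination (-m 0) * d - (m 1 + m 2) * o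
  · linear_combination (-m 1) * d - (m 0 + m 2) * o
  · linear_combination (-m 2) * d - (m 0 + m 1) * o

theorem ev_sq (he : NB e) (m : ZMod 3 → M) (j : ZMod 3) : ev e (fun i => m i ^ 2) j = ev e m (j + 2) ^ 2 := by
  have s0 := he.sq j
  have s1 := he.sq (j + 1)
  have s2 := he.sq (j + 2)
  have two := he.two
  simp only [z3a, z3c] at s1 s2
  simp only [ev, z3c, z3d]
  linear_combination (-m 0 ^ 2) * s2 - m 1 ^ 2 * s0 - m 2 ^ 2 * s1 - (e (j + 2) * m 0 * e j * m 1 +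
    e (j + 2) * m 0 * e (j + 1) * m 2 + e j * m 1 * e (j + 1) * m 2) * two

theorem ev_rot (m : ZMod 3 → M) (j : ZMod 3) : ev e (rot m) j = ev e m (j + 2) := by
  have h0 : rot m 0 = m 1 := rfl
  have h1 : rot m 1 = m 2 := rfl
  have h2 : rot m 2 = m 0 := rfl
  simp only [ev, h0, h1, h2, z3c, z3d]
  ring

theorem ev_N3' (he : NB e) (m : ZMod 3 → M) (j : ZMod 3) : ev e (mul3 m (mul3 (rot m) (rot (rot m)))) j = ev e m 0 * ev e m 1 * ev e m 2 := by
  have hj : ∀ j : ZMod 3, j = 0 ∨ j = 1 ∨ j = 2 := by decide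
  have c2 : (0 : ZMod 3) + 2 = 2 := rfl
  have c4 : (1 : ZMod 3) + 2 = 0 := rfl
  have c6 : (2 : ZMod 3) + 2 = 1 := rfl
  simp only [ev_mul he, ev_rot]
  rcases hj j with rfl | rfl | rfl <;> simp only [c2, c4, c6] <;> ring

theorem ev_N3 (he : NB e) (m : ZMod 3 → M) : N3 m = ev e m 0 * ev e m 1 * ev e m 2 := by
  rw [N3, ev_rec he (mul3 m (mul3 (rot m) (rot (rot m)))) 0]
  simp only [ev_N3' he]
  have t := he.tr 0
  linear_combination (ev e m 0 * ev e m 1 * ev e m 2) * t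

theorem ev_N3j (he : NB e) (m : ZMod 3 → M) (j : ZMod 3) : N3 m = ev e m j * ev e m (j + 1) * ev e m (j + 2) := by
  have hj : ∀ j : ZMod 3, j = 0 ∨ j = 1 ∨ j = 2 := by decide
  have c1 : (0 : ZMod 3) + 1 = 1 := rfl
  have c2 : (0 : ZMod 3) + 2 = 2 := rfl
  have c3 : (1 : ZMod 3) + 1 = 2 := rfl
  have c4 : (1 : ZMod 3) + 2 = 0 := rfl
  have c5 : (2 : ZMod 3) + 1 = 0 := rfl
  have c6 : (2 : ZMod 3) + 2 = 1 := rfl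
  rw [ev_N3 he]
  rcases hj j with rfl | rfl | rfl <;> simp only [c1, c2, c3, c4, c5, c6] <;> ring
end

section
variable {M : Type} [Field M] {e : ZMod 3 → M}

theorem ev_inv (he : NB e) (j : ZMod 3) (m : ZMod 3 → M) (h : ∀ j, ev e m j ≠ 0) : ev e (inv3 m) j = (ev e m j)⁻¹ := by
  have : ev e (inv3 m) j = ev e (mul3 (rot m) (rot (rot m))) j / N3 m := by
    simp only [ev, inv3]; ring
  rw [this, ev_mul he, ev_rot, ev_rot, ev_rot, ev_N3j he m j, z3d]
  have := h j
  have := h (j + 1)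
  have := h (j + 2)
  field_simp

/-- The label `a` as an element of `F_8`. -/
def al (e : ZMod 3 → M) (j : ZMod 3) (a : Fin 8) : M := ev e (fun i => (co i a : M)) j
def omF (e : ZMod 3 → M) (x : Fin 8 → M) (j : ZMod 3) : M := ∑ a, al e j a * Xn x a
def VF (e : ZMod 3 → M) (x : Fin 8 → M) (j : ZMod 3) : M := omF e x (j + 2) ^ 2 - omF e x j

theorem ev_sub (j : ZMod 3) (m n : ZMod 3 → M) : ev e (fun i => m i - n i) j = ev e m j - ev e n j := by
  simp only [ev]; ring
theorem ev_sum (j : ZMod 3) {ι : Type} (s : Finset ι) (m : ι → ZMod 3 → M) (c : ι → M) :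
    ev e (fun i => ∑ a ∈ s, m a i * c a) j = ∑ a ∈ s, ev e (m a) j * c a := by
  simp only [ev, Finset.mul_sum, ← Finset.sum_add_distrib]
  exact Finset.sum_congr rfl fun a _ => by ring

theorem ev_wc (x : Fin 8 → M) (j : ZMod 3) : ev e (wc x) j = omF e x j :=
  ev_sum j Finset.univ (fun a i => (co i a : M)) (Xn x)

theorem ev_vc (he : NB e) (x : Fin 8 → M) (j : ZMod 3) : ev e (vc x) j = VF e x j := by
  have : ev e (vc x) j = ev e (fun i => wc x i ^ 2) j - ev e (wc x) j := ev_sub j _ _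
  rw [this, ev_sq he, ev_wc, ev_wc, VF]

theorem ev_rc (he : NB e) (x : Fin 8 → M) (j : ZMod 3) (hV : ∀ j, VF e x j ≠ 0) : ev e (rc x) j = VF e x (j + 2) ^ 2 / VF e x j := by
  rw [rc, ev_mul he, ev_sq he, ev_inv he j _ (fun j => by rw [ev_vc he]; exact hV j), ev_vc he, ev_vc he]
  rw [div_eq_mul_inv]

theorem ev_Wc (he : NB e) (x : Fin 8 → M) (j : ZMod 3) (hV : ∀ j, VF e x j ≠ 0) (a : Fin 8) : ev e (Wc x a) j = (al e j a - omF e x j) / VF e x j := by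
  rw [Wc, ev_mul he, ev_inv he j _ (fun j => by rw [ev_vc he]; exact hV j), ev_vc he, ev_sub, ev_wc]
  rw [div_eq_mul_inv]; rfl

theorem ev_Qc (he : NB e) (x : Fin 8 → M) (j : ZMod 3) (hV : ∀ j, VF e x j ≠ 0) : ev e (Qc x) j = ∑ a, ((al e j a - omF e x j) / VF e x j) *
    ((al e (j + 2) a - omF e x (j + 2)) / VF e x (j + 2)) * Xn x a := by
  have : ev e (Qc x) j = ∑ a, ev e (mul3 (Wc x a) (rot (Wc x a))) j * Xn x a :=
    ev_sum j Finset.univ (fun a => mul3 (Wc x a) (rot (Wc x a))) (Xn x)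
  rw [this]
  simp only [ev_mul he, ev_rot, ev_Wc he x _ hV]

theorem ev_q7 (he : NB e) (x : Fin 8 → M) (hV : ∀ j, VF e x j ≠ 0) (j : ZMod 3) : q7 x = ∑ a, ((al e j a - omF e x j) / VF e x j) *
    ((al e (j + 1) a - omF e x (j + 1)) / VF e x (j + 1)) *
    ((al e (j + 2) a - omF e x (j + 2)) / VF e x (j + 2)) * Xn x a := by
  simp only [q7, ev_N3j he _ j, ev_Wc he x _ hV]

theorem sum_Xn (x : Fin 8 → M) (ht : tv x ≠ 0) : ∑ a, Xn x a = 1 := by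
  simp only [Xn, ← Finset.sum_div]
  exact div_self ht

theorem inv_general (he : NB e) (x : Fin 8 → M) (ht : tv x ≠ 0) (hV : ∀ j, VF e x j ≠ 0) (g : Equiv.Perm (Fin 8)) (c : ZMod 3)
    (l b : ZMod 3 → M) (hl0 : ∀ j, l j ≠ 0) (hl : ∀ j, l (j + 2) ^ 2 = l j) (hb : ∀ j, b (j + 2) ^ 2 = b j)
    (h : ∀ j a, al e j a = l j * al e (j + c) (g a) + b j) :
    (∀ j, ev e (rc (fun a => x (g a))) j = ev e (rc x) (j + c)) ∧
    (∀ j, ev e (Qc (fun a => x (g a))) j = ev e (Qc x) (j + c)) ∧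
    q7 (fun a => x (g a)) = q7 x := by
  have two := he.two
  have hX : ∀ a, Xn (fun a => x (g a)) a = Xn x (g a) := fun a => by simp only [Xn, tv_perm]
  have hom : ∀ j, omF e (fun a => x (g a)) j = l j * omF e x (j + c) + b j := by
    intro j
    simp only [omF, hX, h j]
    rw [Equiv.sum_comp g (fun a => (l j * al e (j + c) a + b j) * Xn x a)]
    simp only [add_mul, Finset.sum_add_distrib, mul_assoc, ← Finset.mul_sum, sum_Xn x ht, mul_one]
  have r2 : ∀ j, j + 2 + c = j + c + 2 := fun j => by ring
  have r1 : ∀ j, j + 1 + c = j + c + 1 := fun j => by ring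
  have hVV : ∀ j, VF e (fun a => x (g a)) j = l j * VF e x (j + c) := by
    intro j
    simp only [VF, hom, r2]
    linear_combination (omF e x (j + c + 2) ^ 2) * hl j + hb j +
      (l (j + 2) * omF e x (j + c + 2) * b (j + 2)) * two
  have hV' : ∀ j, VF e (fun a => x (g a)) j ≠ 0 := fun j => by
    rw [hVV]; exact mul_ne_zero (hl0 j) (hV _)
  have hW : ∀ j a, (al e j a - omF e (fun a => x (g a)) j) / VF e (fun a => x (g a)) j =
      (al e (j + c) (g a) - omF e x (j + c)) / VF e x (j + c) := by
    intro j a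
    rw [h, hom, hVV]
    have := hl0 j
    have := hV (j + c)
    field_simp
    ring
  refine ⟨?_, ?_, ?_⟩
  · intro j
    rw [ev_rc he _ _ hV', ev_rc he _ _ hV, hVV, hVV, r2, mul_pow, hl]
    have := hl0 j
    have := hV (j + c)
    field_simp
  · intro j
    rw [ev_Qc he _ _ hV', ev_Qc he _ _ hV]
    simp only [hW, hX, r2]
    exact Equiv.sum_comp g (fun a => (al e (j + c) a - omF e x (j + c)) / VF e x (j + c) *
      ((al e (j + c + 2) a - omF e x (j + c + 2)) / VF e x (j + c + 2)) * Xn x a)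
  · rw [ev_q7 he _ hV' 0, ev_q7 he _ hV (0 + c)]
    simp only [hW, hX, r2, r1]
    exact Equiv.sum_comp g (fun a => (al e (0 + c) a - omF e x (0 + c)) / VF e x (0 + c) *
      ((al e (0 + c + 1) a - omF e x (0 + c + 1)) / VF e x (0 + c + 1)) *
      ((al e (0 + c + 2) a - omF e x (0 + c + 2)) / VF e x (0 + c + 2)) * Xn x a)
end

section
variable {M : Type} [Field M] {e : ZMod 3 → M}

theorem NB.charP (he : NB e) : CharP M 2 :=
  (CharP.charP_iff_prime_eq_zero (by norm_num)).mpr (by exact_mod_cast he.two)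

theorem NB.exPhi (he : NB e) : ∃ φ : ZMod 2 →+* M, True := by
  have := he.charP
  exact ⟨ZMod.castHom (dvd_refl 2) M, trivial⟩

theorem al_phi (φ : ZMod 2 →+* M) (j : ZMod 3) (a : Fin 8) :
    al e j a = ev e (fun i => φ (co i a : ZMod 2)) j := by
  simp only [al, map_natCast]

theorem NB.ne (he : NB e) (j : ZMod 3) : e j ≠ 0 := by
  intro h
  have h1 := he.sq j
  have h2 := he.sq (j + 1)
  have t := he.tr j
  rw [z3a] at h2
  rw [h] at h1 t
  rw [← h1] at h2 t
  rw [← h2] at t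
  norm_num at t

theorem al_frob (he : NB e) (j : ZMod 3) (a : Fin 8) : al e (j + 2) a ^ 2 = al e j a := by
  have hd : ∀ (i : ZMod 3) (a : Fin 8), co i a ^ 2 = co i a := by decide
  rw [al, ← ev_sq he]
  have : (fun i => ((co i a : M)) ^ 2) = fun i => (co i a : M) := by
    funext i
    exact_mod_cast congrArg (Nat.cast : ℕ → M) (hd i a)
  rw [this, al]

theorem al_trans (he : NB e) (g : Equiv.Perm (Fin 8))
    (hg : g ∈ ({gS1, gS2, gK} : Set (Equiv.Perm (Fin 8)))) (j : ZMod 3) (a : Fin 8) :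
    al e j a = 1 * al e (j + 0) (g a) + al e j (g 0) := by
  obtain ⟨φ, -⟩ := he.exPhi
  have hd : ∀ (i : ZMod 3) (a : Fin 8), (co i a : ZMod 2) = co i (g a) + co i (g 0) := by
    rcases hg with rfl | rfl | rfl <;> decide
  simp only [al_phi φ, add_zero, one_mul]
  simp only [hd _ a, map_add, ev]
  ring

theorem al_T (he : NB e) (j : ZMod 3) (a : Fin 8) :
    al e j a = e (j + 2) * al e (j + 0) (gT a) + 0 := by
  obtain ⟨φ, -⟩ := he.exPhi
  have hd : ∀ (i : ZMod 3) (a : Fin 8), (co i a : ZMod 2) =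
      mul3 (fun i => if i = 2 then 1 else 0) (fun i => (co i (gT a) : ZMod 2)) i := by
    decide
  have h2 : e (j + 2) = ev e (fun i => φ (if i = 2 then 1 else 0)) j := by
    have c1 : ¬ ((0 : ZMod 3) = 2) := by decide
    have c2 : ¬ ((1 : ZMod 3) = 2) := by decide
    simp [ev, c1, c2]
  simp only [al_phi φ, add_zero]
  rw [h2, ← ev_mul he, mul3_map]
  simp only [hd _ a]

theorem al_P (j : ZMod 3) (a : Fin 8) : al e j a = 1 * al e (j + 2) (gP a) + 0 := by
  have hd : ∀ (i : ZMod 3) (a : Fin 8), co i a = co (i + 1) (gP a) := by decide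
  rw [al, al, ← ev_rot, one_mul, add_zero]
  simp only [hd _ a]
  rfl

theorem genF_inv (he : NB e) (x : Fin 8 → M) (ht : tv x ≠ 0) (hV : ∀ j, VF e x j ≠ 0)
    (g : Equiv.Perm (Fin 8)) (hg : g ∈ ({gS1, gS2, gK, gT} : Set (Equiv.Perm (Fin 8)))) :
    genF M (fun a => x (g a)) = genF M x := by
  have h : (g ∈ ({gS1, gS2, gK} : Set (Equiv.Perm (Fin 8)))) ∨ g = gT := by
    rcases hg with rfl | rfl | rfl | rfl
    · left; simp
    · left; simp
    · left; simp
    · right; rfl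
  have key : (∀ j, ev e (rc (fun a => x (g a))) j = ev e (rc x) (j + 0)) ∧
    (∀ j, ev e (Qc (fun a => x (g a))) j = ev e (Qc x) (j + 0)) ∧
    q7 (fun a => x (g a)) = q7 x := by
    rcases h with h | rfl
    · exact inv_general he x ht hV g 0 (fun _ => 1) (fun j => al e j (g 0)) (fun _ => one_ne_zero)
        (fun _ => one_pow 2) (fun j => al_frob he j _) (al_trans he g h)
    · exact inv_general he x ht hV gT 0 (fun j => e (j + 2)) (fun _ => 0) (fun _ => he.ne _)
        (fun j => by rw [he.sq, z3c]) (fun j => by ring) (al_T he)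
  obtain ⟨k1, k2, k3⟩ := key
  have r : rc (fun a => x (g a)) = rc x := by
    funext i
    rw [ev_rec he (rc x) i, ev_rec he (rc (fun a => x (g a))) i, k1, k1, k1]
    simp only [add_zero]
  have q : Qc (fun a => x (g a)) = Qc x := by
    funext i
    rw [ev_rec he (Qc x) i, ev_rec he (Qc (fun a => x (g a))) i, k2, k2, k2]
    simp only [add_zero]
  simp only [genF, r, q, k3, tv_perm]

theorem rec_shift (he : NB e) (m n : ZMod 3 → M) (h : ∀ j, ev e m j = ev e n (j + 2)) (i : ZMod 3) :
    m i = n (i + 1) := by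
  rw [ev_rec he n (i + 1), ev_rec he m i, h, h, h, z3a, z3b]
  have c2 : (0 : ZMod 3) + 2 = 2 := rfl
  have c4 : (1 : ZMod 3) + 2 = 0 := rfl
  have c6 : (2 : ZMod 3) + 2 = 1 := rfl
  rw [c2, c4, c6]
  ring

theorem genF_P (he : NB e) (x : Fin 8 → M) (ht : tv x ≠ 0) (hV : ∀ j, VF e x j ≠ 0) (i : Fin 8) :
    genF M (fun a => x (gP a)) i = genF M x (![1, 2, 0, 4, 5, 3, 6, 7] i) := by
  obtain ⟨k1, k2, k3⟩ := inv_general he x ht hV gP 2 (fun _ => 1) (fun _ => 0) (fun _ => one_ne_zero)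
        (fun _ => one_pow 2) (fun j => by ring) al_P
  have r := rec_shift he _ _ k1
  have q := rec_shift he _ _ k2
  simp only [genF, k3, tv_perm]
  fin_cases i <;> simp only [Fin.zero_eta, Fin.mk_one, Fin.reduceFinMk, Matrix.cons_val]
  · exact r 0
  · exact r 1
  · exact r 2
  · exact q 0
  · exact q 1
  · exact q 2

theorem al_delta (he : NB e) (a b : Fin 8) : (al e 0 a - al e 0 b) * (al e 1 a - al e 1 b) *
    (al e 2 a - al e 2 b) = if a = b then 0 else 1 := by
  obtain ⟨φ, -⟩ := he.exPhi
  have hd : ∀ a b : Fin 8, N3 (fun i => (co i a : ZMod 2) - co i b) = if a = b then 0 else 1 := by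
    decide
  have := ev_N3 he (fun i => φ ((co i a : ZMod 2) - co i b))
  rw [N3_map, hd] at this
  simp only [al_phi φ, ← ev_sub, ← map_sub]
  rw [← this]
  split_ifs <;> simp

end

section
variable {M : Type} [Field M] {e : ZMod 3 → M}

theorem sumP0 (x : Fin 8 → M) (ht : tv x ≠ 0) (j : ZMod 3) :
    ∑ a, (al e j a - omF e x j) * Xn x a = 0 := by
  simp only [sub_mul, Finset.sum_sub_distrib, ← Finset.mul_sum, sum_Xn x ht]
  simp [omF]

theorem sumPP (he : NB e) (x : Fin 8 → M) (hV : ∀ j, VF e x j ≠ 0) (j : ZMod 3) :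
    ∑ a, (al e j a - omF e x j) * (al e (j + 2) a - omF e x (j + 2)) * Xn x a =
      VF e x j * VF e x (j + 2) * ev e (Qc x) j := by
  rw [ev_Qc he _ _ hV, Finset.mul_sum]
  refine Finset.sum_congr rfl fun a _ => ?_
  have := hV j
  have := hV (j + 2)
  field_simp

theorem sumPPP (he : NB e) (x : Fin 8 → M) (hV : ∀ j, VF e x j ≠ 0) :
    ∑ a, (al e 0 a - omF e x 0) * (al e 1 a - omF e x 1) * (al e 2 a - omF e x 2) * Xn x a =
      VF e x 0 * VF e x 1 * VF e x 2 * q7 x := by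
  rw [ev_q7 he _ hV 0, Finset.mul_sum]
  refine Finset.sum_congr rfl fun a _ => ?_
  have := hV 0
  have := hV 1
  have := hV 2
  have c1 : (0 : ZMod 3) + 1 = 1 := rfl
  have c2 : (0 : ZMod 3) + 2 = 2 := rfl
  rw [c1, c2]
  field_simp

theorem Xn_rec (he : NB e) (x : Fin 8 → M) (ht : tv x ≠ 0) (hV : ∀ j, VF e x j ≠ 0) (b : Fin 8) :
    Xn x b = 1 - (VF e x 0 * VF e x 1 * VF e x 2 * q7 x
      + (omF e x 1 - al e 1 b) * (VF e x 0 * VF e x 2 * ev e (Qc x) 0)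
      + (omF e x 2 - al e 2 b) * (VF e x 1 * VF e x 0 * ev e (Qc x) 1)
      + (omF e x 0 - al e 0 b) * (VF e x 2 * VF e x 1 * ev e (Qc x) 2)
      + (omF e x 0 - al e 0 b) * (omF e x 1 - al e 1 b) * (omF e x 2 - al e 2 b)) := by
  have s0 := sumPP he x hV 0
  have s1 := sumPP he x hV 1
  have s2 := sumPP he x hV 2
  have c2 : (0 : ZMod 3) + 2 = 2 := rfl
  have c4 : (1 : ZMod 3) + 2 = 0 := rfl
  have c6 : (2 : ZMod 3) + 2 = 1 := rfl
  rw [c2] at s0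
  rw [c4] at s1
  rw [c6] at s2
  rw [← s0, ← s1, ← s2, ← sumPPP he x hV]
  have z0 := sumP0 (e := e) x ht 0
  have z1 := sumP0 (e := e) x ht 1
  have z2 := sumP0 (e := e) x ht 2
  have h1 := sum_Xn x ht
  have key : ∑ a, (al e 0 a - al e 0 b) * (al e 1 a - al e 1 b) * (al e 2 a - al e 2 b) * Xn x a =
      1 - Xn x b := by
    simp only [al_delta he, ite_mul, zero_mul, one_mul]
    rw [← h1, eq_sub_iff_add_eq]
    have : ∀ i, (if i = b then 0 else Xn x i) = Xn x i - if i = b then Xn x i else 0 := by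
      intro i; split_ifs <;> simp
    simp [this]
  have ex : ∑ a, (al e 0 a - al e 0 b) * (al e 1 a - al e 1 b) * (al e 2 a - al e 2 b) * Xn x a =
    ∑ a, (al e 0 a - omF e x 0) * (al e 1 a - omF e x 1) * (al e 2 a - omF e x 2) * Xn x a
     + (omF e x 1 - al e 1 b) * ∑ a, (al e 0 a - omF e x 0) * (al e 2 a - omF e x 2) * Xn x a
     + (omF e x 2 - al e 2 b) * ∑ a, (al e 1 a - omF e x 1) * (al e 0 a - omF e x 0) * Xn x a
     + (omF e x 0 - al e 0 b) * ∑ a, (al e 2 a - omF e x 2) * (al e 1 a - omF e x 1) * Xn x a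
     + (omF e x 1 - al e 1 b) * (omF e x 2 - al e 2 b) * ∑ a, (al e 0 a - omF e x 0) * Xn x a
     + (omF e x 0 - al e 0 b) * (omF e x 2 - al e 2 b) * ∑ a, (al e 1 a - omF e x 1) * Xn x a
     + (omF e x 0 - al e 0 b) * (omF e x 1 - al e 1 b) * ∑ a, (al e 2 a - omF e x 2) * Xn x a
     + (omF e x 0 - al e 0 b) * (omF e x 1 - al e 1 b) * (omF e x 2 - al e 2 b) * ∑ a, Xn x a := by
    simp only [Finset.mul_sum, ← Finset.sum_add_distrib]
    exact Finset.sum_congr rfl fun a _ => by ring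
  rw [key, z0, z1, z2, h1] at ex
  linear_combination -ex

theorem rankF (he : NB e) (x : Fin 8 → M) {K : Type} [Field K] [Algebra K M]
    (hx : IntermediateField.adjoin K (Set.range x) = ⊤) (ht : tv x ≠ 0) (hV : ∀ j, VF e x j ≠ 0)
    (heK : ∀ (F : IntermediateField K M) j, e j ∈ F) :
    Module.rank ↥(IntermediateField.adjoin K (Set.range (genF M x))) M ≤ ((56 : ℕ) : Cardinal) := by
  set E := IntermediateField.adjoin K (Set.range (genF M x)) with hE
  have hm : ∀ i, genF M x i ∈ E := fun i => IntermediateField.subset_adjoin K _ ⟨i, rfl⟩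
  have hj : ∀ j : ZMod 3, j = 0 ∨ j = 1 ∨ j = 2 := by decide
  have evm : ∀ (F : IntermediateField K M) (m : ZMod 3 → M), (∀ i, m i ∈ F) → ∀ j, ev e m j ∈ F :=
    fun F m h j => F.add_mem (F.add_mem (F.mul_mem (heK F _) (h _)) (F.mul_mem (heK F _) (h _)))
      (F.mul_mem (heK F _) (h _))
  have mr : ∀ i, rc x i ∈ E := by
    intro i
    rcases hj i with rfl | rfl | rfl
    · exact hm 0
    · exact hm 1
    · exact hm 2
  have mq : ∀ i, Qc x i ∈ E := by
    intro i
    rcases hj i with rfl | rfl | rfl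
    · exact hm 3
    · exact hm 4
    · exact hm 5
  have m7 : q7 x ∈ E := hm 6
  have mt : tv x ∈ E := hm 7
  have mT := evm E _ mr
  have t0 : ev e (rc x) 0 = VF e x 2 ^ 2 / VF e x 0 := ev_rc he x 0 hV
  have t1 : ev e (rc x) 1 = VF e x 0 ^ 2 / VF e x 1 := ev_rc he x 1 hV
  have t2 : ev e (rc x) 2 = VF e x 1 ^ 2 / VF e x 2 := ev_rc he x 2 hV
  have n0 := hV 0
  have n1 := hV 1
  have n2 := hV 2
  have h7 : VF e x 0 ^ 7 = ev e (rc x) 1 ^ 4 * ev e (rc x) 2 ^ 2 * ev e (rc x) 0 := by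
    rw [t0, t1, t2]
    field_simp
  have hv1 : VF e x 1 = VF e x 0 ^ 2 / ev e (rc x) 1 := by
    rw [t1]; field_simp
  have hv2 : VF e x 2 = VF e x 1 ^ 2 / ev e (rc x) 2 := by
    rw [t2]; field_simp
  refine degStep E (VF e x 0) 7 ![VF e x 0 ^ 7, 0, 0, 0, 0, 0, 0] ?_ ?_ 8 ?_
  · intro i
    fin_cases i
    · change VF e x 0 ^ 7 ∈ E
      rw [h7]
      exact E.mul_mem (E.mul_mem (pow_mem (mT 1) 4) (pow_mem (mT 2) 2)) (mT 0)
    all_goals exact E.zero_mem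
  · simp [Fin.sum_univ_seven]
  set F := E ⊔ IntermediateField.adjoin K {VF e x 0} with hF
  have leF : E ≤ F := le_sup_left
  have v0 : VF e x 0 ∈ F := le_sup_right (a := E) (IntermediateField.subset_adjoin K _ (by simp))
  have v1 : VF e x 1 ∈ F := by rw [hv1]; exact F.div_mem (pow_mem v0 2) (leF (mT 1))
  have v2 : VF e x 2 ∈ F := by rw [hv2]; exact F.div_mem (pow_mem v1 2) (leF (mT 2))
  have mv : ∀ i, vc x i ∈ F := by
    intro i
    rw [ev_rec he (vc x) i, ev_vc he, ev_vc he, ev_vc he]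
    exact F.add_mem (F.add_mem (F.mul_mem (heK F _) v0) (F.mul_mem (heK F _) v1)) (F.mul_mem (heK F _) v2)
  have as : ∀ (F' : IntermediateField K M), F ≤ F' → ∀ i, ∀ k : ℕ,
      Module.rank ↥(F' ⊔ IntermediateField.adjoin K {wc x i}) M ≤ (k : Cardinal) →
      Module.rank ↥F' M ≤ ((2 * k : ℕ) : Cardinal) := by
    intro F' hF' i k hk
    refine degStep F' (wc x i) 2 ![vc x i, 1] ?_ ?_ k hk
    · intro l
      fin_cases l
      · exact hF' (mv i)
      · exact F'.one_mem
    · simp [Fin.sum_univ_two, vc]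
  refine as F le_rfl 0 4 ?_
  set F0 := F ⊔ IntermediateField.adjoin K {wc x 0} with hF0
  have le0 : F ≤ F0 := le_sup_left
  have w0 : wc x 0 ∈ F0 := le_sup_right (a := F) (IntermediateField.subset_adjoin K _ (by simp))
  refine as F0 le0 1 2 ?_
  set F1 := F0 ⊔ IntermediateField.adjoin K {wc x 1} with hF1
  have le1 : F0 ≤ F1 := le_sup_left
  have w1 : wc x 1 ∈ F1 := le_sup_right (a := F0) (IntermediateField.subset_adjoin K _ (by simp))
  refine as F1 (le0.trans le1) 2 1 ?_
  set F2 := F1 ⊔ IntermediateField.adjoin K {wc x 2} with hF2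
  have le2 : F1 ≤ F2 := le_sup_left
  have w2 : wc x 2 ∈ F2 := le_sup_right (a := F1) (IntermediateField.subset_adjoin K _ (by simp))
  have leA : F ≤ F2 := (le0.trans le1).trans le2
  have leE : E ≤ F2 := leF.trans leA
  have mw : ∀ i, wc x i ∈ F2 := by
    intro i
    rcases hj i with rfl | rfl | rfl
    · exact le2 (le1 w0)
    · exact le2 w1
    · exact w2
  have mo : ∀ j, omF e x j ∈ F2 := by
    intro j
    rw [← ev_wc]
    exact evm F2 _ mw j
  have ma : ∀ j a, al e j a ∈ F2 := fun j a => evm F2 _ (fun i => natCast_mem F2 _) j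
  have mQ : ∀ j, ev e (Qc x) j ∈ F2 := evm F2 _ (fun i => leE (mq i))
  have mc : ∀ j b, omF e x j - al e j b ∈ F2 := fun j b => F2.sub_mem (mo j) (ma j b)
  have mV : ∀ j, VF e x j ∈ F2 := by
    intro i
    rcases hj i with rfl | rfl | rfl
    · exact leA v0
    · exact leA v1
    · exact leA v2
  apply rank_top_le
  rw [eq_top_iff, ← hx, IntermediateField.adjoin_le_iff]
  rintro _ ⟨b, rfl⟩
  have hb : x b = tv x * Xn x b := by rw [Xn]; field_simp
  have hX : Xn x b ∈ F2 := by
    rw [Xn_rec he x ht hV b]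
    refine F2.sub_mem F2.one_mem (F2.add_mem (F2.add_mem (F2.add_mem (F2.add_mem ?_ ?_) ?_) ?_) ?_)
    · exact F2.mul_mem (F2.mul_mem (F2.mul_mem (mV _) (mV _)) (mV _)) (leE m7)
    · exact F2.mul_mem (mc _ _) (F2.mul_mem (F2.mul_mem (mV _) (mV _)) (mQ _))
    · exact F2.mul_mem (mc _ _) (F2.mul_mem (F2.mul_mem (mV _) (mV _)) (mQ _))
    · exact F2.mul_mem (mc _ _) (F2.mul_mem (F2.mul_mem (mV _) (mV _)) (mQ _))
    · exact F2.mul_mem (F2.mul_mem (mc _ _) (mc _ _)) (mc _ _)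
  rw [hb]
  exact F2.mul_mem (leE mt) hX
end

theorem al_map {M M' : Type} [Field M] [Field M'] (f : M →+* M') (e : ZMod 3 → M) (j : ZMod 3) (a : Fin 8) :
    al (fun i => f (e i)) j a = f (al e j a) := by
  simp [al, ev]

theorem NB.map {M M' : Type} [CommRing M] [CommRing M'] (f : M →+* M') {e : ZMod 3 → M} (he : NB e) :
    NB (fun i => f (e i)) where
  two := by rw [← map_ofNat f 2, he.two, map_zero]
  tr j := by rw [← map_add, ← map_add, he.tr, map_one]
  sq j := by rw [← map_pow, he.sq]
  mul j := by rw [← map_mul, he.mul, map_add]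

theorem tF_ne (K : Type) [Field K] : tv (Xvar K (Fin 8)) ≠ 0 := by
  have : tv (Xvar K (Fin 8)) = algebraMap (MvPolynomial (Fin 8) K) (RFF K (Fin 8)) (tv MvPolynomial.X) :=
    tv_map _ _
  rw [this]
  refine nonvanish K _ (fun a => if a = 0 then 1 else 0) ?_
  rw [← tv_map]
  simp [tv]

theorem VF_ne (K : Type) [Field K] (e : ZMod 3 → K) (he : NB e) (j : ZMod 3) :
    VF (fun i => algebraMap K (RFF K (Fin 8)) (e i)) (Xvar K (Fin 8)) j ≠ 0 := by
  have ht := tF_ne K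
  set P : MvPolynomial (Fin 8) K := (∑ a, MvPolynomial.C (al e (j + 2) a) * MvPolynomial.X a) ^ 2 -
    (∑ a, MvPolynomial.C (al e j a) * MvPolynomial.X a) * tv MvPolynomial.X with hP
  have hPn : algebraMap (MvPolynomial (Fin 8) K) (RFF K (Fin 8)) P ≠ 0 := by
    refine nonvanish K _ (fun a => if a = 0 then 1 else if a = 7 then 1 else 0) ?_
    have z : ∀ j, al e j 0 = 0 := by
      intro j
      have : ∀ i, co i 0 = 0 := by decide
      simp [al, ev, this]
    have o : ∀ j, al e j 7 = 1 := by
      intro j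
      have : ∀ i, co i 7 = 1 := by decide
      simpa [al, ev, this] using he.tr j
    have two := he.two
    have t : tv (fun a : Fin 8 => (if a = 0 then 1 else if a = 7 then 1 else 0 : K)) = 0 := by
      simp only [tv, Fin.sum_univ_eight]
      simp
      linear_combination two
    simp only [hP, map_sub, map_pow, map_sum, map_mul, MvPolynomial.eval_C, MvPolynomial.eval_X, ← tv_map, t]
    simp only [Fin.sum_univ_eight]
    simp [o, z]
  have key : VF (fun i => algebraMap K (RFF K (Fin 8)) (e i)) (Xvar K (Fin 8)) j =
      algebraMap (MvPolynomial (Fin 8) K) (RFF K (Fin 8)) P / tv (Xvar K (Fin 8)) ^ 2 := by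
    have om : ∀ j, omF (fun i => algebraMap K (RFF K (Fin 8)) (e i)) (Xvar K (Fin 8)) j =
        algebraMap (MvPolynomial (Fin 8) K) (RFF K (Fin 8))
          (∑ a, MvPolynomial.C (al e j a) * MvPolynomial.X a) / tv (Xvar K (Fin 8)) := by
      intro j
      simp only [omF, Xn, al_map, map_sum, map_mul, Finset.sum_div, mul_div_assoc]
      rfl
    have t : tv (Xvar K (Fin 8)) = algebraMap (MvPolynomial (Fin 8) K) (RFF K (Fin 8)) (tv MvPolynomial.X) :=
      tv_map _ _
    rw [VF, om, om, hP, map_sub, map_pow, map_mul, ← t]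
    field_simp
  rw [key]
  exact div_ne_zero hPn (pow_ne_zero 2 ht)

theorem caseF (K : Type) [Field K] (h2 : (2 : K) = 0) :
    IsRatExt K ↥(fixedSub K (Fin 8) (Subgroup.closure {gS1, gS2, gK, gT, gP})) := by
  let K' := AlgebraicClosure K
  have h2' : (2 : K') = 0 := by
    rw [← map_ofNat (algebraMap K K') 2, h2, map_zero]
  obtain ⟨ε, hε⟩ : ∃ ε : K', ε ^ 3 + ε ^ 2 + 1 = 0 := by
    have hd : (Polynomial.X ^ 3 + Polynomial.X ^ 2 + 1 : Polynomial K').degree = 3 := by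
      compute_degree!
    obtain ⟨ε, hε⟩ := IsAlgClosed.exists_root (Polynomial.X ^ 3 + Polynomial.X ^ 2 + 1 : Polynomial K')
      (by rw [hd]; decide)
    exact ⟨ε, by simpa [Polynomial.IsRoot] using hε⟩
  have h4 : ε ^ 4 = ε ^ 2 + ε + 1 := by
    linear_combination (ε - 1) * hε - ε * h2' + (0 : K') * h2'
  have h8 : ε ^ 8 = ε := by
    linear_combination (ε ^ 4 + ε ^ 2 + ε + 1) * h4 + h4 + (ε ^ 3 + 2 * ε ^ 2 + ε + 1) * h2'
  have m0 : ε ^ 3 = ε + ε ^ 4 := by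
    linear_combination hε - h4 - (ε ^ 2 + ε + 1) * h2'
  have m1 : ε ^ 6 = ε ^ 2 + ε := by
    linear_combination (ε ^ 3 + ε + ε ^ 4) * m0 + h8 + ε ^ 5 * h2'
  have m2 : ε ^ 5 = ε ^ 4 + ε ^ 2 := by
    linear_combination ε * h4 + m0 + ε * h2'
  let e : ZMod 3 → K' := (![ε, ε ^ 2, ε ^ 4] : Fin 3 → K')
  have e0 : e 0 = ε := rfl
  have e1 : e 1 = ε ^ 2 := rfl
  have e2 : e 2 = ε ^ 4 := rfl
  have hj : ∀ j : ZMod 3, j = 0 ∨ j = 1 ∨ j = 2 := by decide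
  have c1 : (0 : ZMod 3) + 1 = 1 := rfl
  have c2 : (0 : ZMod 3) + 2 = 2 := rfl
  have c3 : (1 : ZMod 3) + 1 = 2 := rfl
  have c4 : (1 : ZMod 3) + 2 = 0 := rfl
  have c5 : (2 : ZMod 3) + 1 = 0 := rfl
  have c6 : (2 : ZMod 3) + 2 = 1 := rfl
  have ht : ε + ε ^ 2 + ε ^ 4 = 1 := by linear_combination h4 + (ε + ε ^ 2) * h2'
  have he : NB e := by
    refine ⟨h2', ?_, ?_, ?_⟩
    · intro j
      rcases hj j with rfl | rfl | rfl <;> simp only [c1, c2, c3, c4, c5, c6, e0, e1, e2] <;>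
        linear_combination ht
    · intro j
      rcases hj j with rfl | rfl | rfl <;> simp only [c1, c2, c3, c4, c5, c6, e0, e1, e2]
      · ring
      · linear_combination h8
    · intro j
      rcases hj j with rfl | rfl | rfl <;> simp only [c1, c2, c3, c4, c5, c6, e0, e1, e2]
      · linear_combination m0
      · linear_combination m1
      · linear_combination m2
  have heM := he.map (algebraMap K' (RFF K' (Fin 8)))
  have hV := VF_ne K' e he
  have htv := tF_ne K'
  refine stageI' K K' genF genF_map (fun g hg => genF_inv heM _ htv hV g hg)
    (fun i => genF_P heM _ htv hV i) ?_
  exact rankF heM _ (adjoin_Xvar K') htv hV (fun F j => F.algebraMap_mem _)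

/-- **Rationality for `G₃₆`.** For any field `K`, the subgroup `G₃₆ ⊆ S₈` of order 168 generated by `σ₁`, `σ₂`, `κ`, `θ = (2,3,7,4,5,6,8)` and `φ₁ = (2,3,4)(7,6,5)` has `K`-rational fixed field. -/
theorem rationality_G36 (K : Type) [Field K] :
    IsRatExt K ↥(fixedSub K (Fin 8) (Subgroup.closure
      {Equiv.swap (0 : Fin 8) 1 * Equiv.swap 2 3 * Equiv.swap 4 5 * Equiv.swap 6 7,
       Equiv.swap (0 : Fin 8) 2 * Equiv.swap 1 3 * Equiv.swap 4 6 * Equiv.swap 5 7,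
       Equiv.swap (0 : Fin 8) 4 * Equiv.swap 1 5 * Equiv.swap 2 6 * Equiv.swap 3 7,
       Equiv.swap (1 : Fin 8) 2 * Equiv.swap 2 6 * Equiv.swap 6 3 * Equiv.swap 3 4 * Equiv.swap 4 5 * Equiv.swap 5 7,
       (Equiv.swap (1 : Fin 8) 2 * Equiv.swap 2 3) * (Equiv.swap (6 : Fin 8) 5 * Equiv.swap 5 4)})) := by
  by_cases h2 : (2 : K) = 0
  · exact caseF K h2
  · by_cases h7 : (7 : K) = 0
    · exact caseE K h7
    · exact caseD K h2 h7
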